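/- arXiv:2212.04284 — 2 statements merged into one kernel-verified Lean document; each statement's English description precedes it below -/
import Mathlib

section
/- Suppose r_i β_i⁺ e^{d_i⁺ r_i} ≤ e for each i = 1,…,m. Then each μ_i = (1/r_i)·ln(e²/(r_i β_i⁺)) is strictly positive (so B = diag(−μ₁,…,−μ_m) has negative diagonal entries), and the Nicholson right-hand side f(t,φ), with components f_i(t,φ) = −d̃_i(t)φ_i(0) + Σ_{j=1}^m ã_{ij}(t)φ_j(0) + β̃_i(t)φ_i(−r_i)e^{−c̃_i(t)φ_i(−r_i)}, satisfies the quasimonotone condition for the exponential order: for every t ∈ ℝ and all φ, ψ ∈ X with φ ≤_B ψ, f_i(t,ψ) − f_i(t,φ) ≥ −μ_i(ψ_i(0) − φ_i(0)) for each i. Consequently the solutions are monotone for ≤_B: if φ ≤_B ψ then y_t(φ) ≤_B y_t(ψ) for all t ≥ 0. -/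
open MeasureTheory Filter Topology Set

noncomputable section

namespace Nicholson

/-- An almost periodic function: continuous, with a relatively dense set of
`ε`-periods for every `ε > 0`. -/
def AlmostPeriodic (f : ℝ → ℝ) : Prop :=
  Continuous f ∧ ∀ ε > 0, ∃ L > 0, ∀ a : ℝ, ∃ s ∈ Set.Icc a (a + L),
    ∀ t, |f (t + s) - f t| < ε

/-- The phase space `X = C([-r₁,0]) × ⋯ × C([-r_m,0])` (as plain functions;
continuity is carried by the solutions). -/
abbrev XN (m : ℕ) (r : Fin m → ℝ) := ∀ i : Fin m, Set.Icc (-(r i)) (0:ℝ) → ℝ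

/-- The cone `X₊` of componentwise nonnegative functions. -/
def XPos {m : ℕ} {r : Fin m → ℝ} (φ : XN m r) : Prop := ∀ i s, 0 ≤ φ i s

/-- The point `0 ∈ [-rᵢ,0]`. -/
def pt0N {m : ℕ} (r : Fin m → ℝ) (hr : ∀ i, 0 < r i) (i : Fin m) :
    Set.Icc (-(r i)) (0:ℝ) :=
  ⟨0, Set.mem_Icc.mpr ⟨by linarith [hr i], le_rfl⟩⟩

/-- The point `-rᵢ ∈ [-rᵢ,0]`. -/
def ptnegN {m : ℕ} (r : Fin m → ℝ) (hr : ∀ i, 0 < r i) (i : Fin m) :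
    Set.Icc (-(r i)) (0:ℝ)  :=
  ⟨-(r i), Set.mem_Icc.mpr ⟨le_rfl, by linarith [hr i]⟩⟩

/-- Conditions (a1)-(a6) on the coefficients of the Nicholson system. -/
def NicholsonHyps (m : ℕ) (d : Fin m → ℝ → ℝ) (a : Fin m → Fin m → ℝ → ℝ)
    (β c : Fin m → ℝ → ℝ) : Prop :=
  (∀ i, AlmostPeriodic (d i)) ∧ (∀ i j, AlmostPeriodic (a i j)) ∧
  (∀ i, AlmostPeriodic (β i)) ∧ (∀ i, AlmostPeriodic (c i)) ∧
  (∃ d₀ > 0, ∀ i t, d₀ ≤ d i t) ∧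
  (∀ i j t, 0 ≤ a i j t) ∧ (∀ i t, a i i t = 0) ∧
  (∀ i t, 0 < β i t) ∧
  (∃ c₀ > 0, ∀ i t, c₀ ≤ c i t) ∧
  (∀ i t, 0 < d i t - ∑ j, a j i t)

/-- The right-hand side of the `i`-th Nicholson equation along a function `y`. -/
def rhs {m : ℕ} (d : Fin m → ℝ → ℝ) (a : Fin m → Fin m → ℝ → ℝ) (β c : Fin m → ℝ → ℝ)
    (r : Fin m → ℝ) (i : Fin m) (t : ℝ) (y : ℝ → Fin m → ℝ) : ℝ :=
  -(d i t) * y t i + (∑ j, a i j t * y t j) +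
    β i t * y (t - r i) i * Real.exp (-(c i t * y (t - r i) i))

/-- `y` is the solution of the Nicholson system with initial value `φ ∈ X`. -/
def SolN {m : ℕ} (d : Fin m → ℝ → ℝ) (a : Fin m → Fin m → ℝ → ℝ) (β c : Fin m → ℝ → ℝ)
    (r : Fin m → ℝ) (φ : XN m r) (y : ℝ → Fin m → ℝ) : Prop :=
  (∀ i, ContinuousOn (fun t => y t i) (Set.Ici (-(r i)))) ∧
  (∀ i (s : Set.Icc (-(r i)) (0:ℝ)), y (s : ℝ) i = φ i s) ∧
  ∀ i t, 0 ≤ t → HasDerivWithinAt (fun u => y u i) (rhs d a β c r i t y) (Set.Ici t) t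

/-- `b` is an entire (globally defined) solution of the Nicholson system. -/
def EntireSolN {m : ℕ} (d : Fin m → ℝ → ℝ) (a : Fin m → Fin m → ℝ → ℝ)
    (β c : Fin m → ℝ → ℝ) (r : Fin m → ℝ) (b : ℝ → Fin m → ℝ) : Prop :=
  ∀ i t, HasDerivAt (fun u => b u i) (rhs d a β c r i t b) t

/-- The segment `y_t ∈ X` of `y`. -/
def segN {m : ℕ} (r : Fin m → ℝ) (y : ℝ → Fin m → ℝ) (t : ℝ) : XN m r :=
  fun i s => y (t + (s : ℝ)) i

/-- The exponential order `φ ≤_B ψ` for `B = diag(-μ₁,…,-μ_m)`. -/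
def expLeN {m : ℕ} (μ : Fin m → ℝ) {r : Fin m → ℝ} (φ ψ : XN m r) : Prop :=
  (∀ i s, φ i s ≤ ψ i s) ∧
  ∀ i, ∀ s t : Set.Icc (-(r i)) (0:ℝ), (s : ℝ) ≤ (t : ℝ) →
    (ψ i s - φ i s) * Real.exp (μ i * (s : ℝ)) ≤ (ψ i t - φ i t) * Real.exp (μ i * (t : ℝ))

/-- The zero element of `X`. -/
def zeroN (m : ℕ) (r : Fin m → ℝ) : XN m r := fun _ _ => 0

/-- Extension of the `i`-th component of `φ` to `ℝ` by the projection onto `[-rᵢ,0]`. -/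
def extN {m : ℕ} {r : Fin m → ℝ} (hr : ∀ i, 0 < r i) (φ : XN m r) (i : Fin m) : ℝ → ℝ :=
  fun s => φ i (Set.projIcc (-(r i)) 0 (by linarith [hr i]) s)

/-- `φ ≫_B 0`: `φ` is Lipschitz, `φᵢ(-rᵢ) > 0` and
`ess inf (φᵢ' + μᵢ φᵢ) > 0` on `[-rᵢ,0]` for each `i`. -/
def strPosN {m : ℕ} {r : Fin m → ℝ} (hr : ∀ i, 0 < r i) (μ : Fin m → ℝ)
    (φ : XN m r) : Prop :=
  (∀ i, ∃ K, LipschitzWith K (φ i)) ∧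
  (∀ i, 0 < φ i (ptnegN r hr i)) ∧
  ∀ i, ∃ ε > 0, ∀ᵐ s ∂(volume.restrict (Set.Ioo (-(r i)) (0:ℝ))),
    DifferentiableAt ℝ (extN hr φ i) s ∧
    ε ≤ deriv (extN hr φ i) s + μ i * extN hr φ i s

/-- The Nicholson nonlinearity `fᵢ(t,φ)`. -/
def fN {m : ℕ} (d : Fin m → ℝ → ℝ) (a : Fin m → Fin m → ℝ → ℝ) (β c : Fin m → ℝ → ℝ)
    (r : Fin m → ℝ) (hr : ∀ i, 0 < r i) (i : Fin m) (t : ℝ) (φ : XN m r) : ℝ :=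
  -(d i t) * φ i (pt0N r hr i) + (∑ j, a i j t * φ j (pt0N r hr j)) +
    β i t * φ i (ptnegN r hr i) * Real.exp (-(c i t * φ i (ptnegN r hr i)))

/-- The supremum over `ℝ` of a real function. -/
def supR (f : ℝ → ℝ) : ℝ := sSup (Set.range f)

/-- The exponents `μᵢ = (1/rᵢ) ln(e²/(rᵢ βᵢ⁺))`. -/
def muN {m : ℕ} (r : Fin m → ℝ) (β : Fin m → ℝ → ℝ) (i : Fin m) : ℝ :=
  (1 / r i) * Real.log (Real.exp 2 / (r i * supR (β i)))

end Nicholson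

namespace Nicholson

/-!
The slope of `u ↦ u e^{-cu}` is at least `-e⁻²`, so passing from `φ` to `ψ` decreases the delayed
term of the `i`-th equation by at most `βᵢ e⁻² (ψᵢ(-rᵢ) - φᵢ(-rᵢ))`, and `φ ≤_B ψ` bounds
`ψᵢ(-rᵢ) - φᵢ(-rᵢ)` by `e^{μᵢ rᵢ} (ψᵢ(0) - φᵢ(0))`. Hence everything rests on the inequality
`dᵢ + βᵢ e^{μᵢ rᵢ - 2} ≤ μᵢ`. By the choice of `μᵢ` one has `βᵢ⁺ e^{μᵢ rᵢ - 2} = 1 / rᵢ`, and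
`rᵢ βᵢ⁺ e^{dᵢ⁺ rᵢ} ≤ e` says that `dᵢ⁺ + 1 / rᵢ ≤ μᵢ`.

For two solutions `y`, `z` the functions `xᵢ(t) = (zᵢ(t) - yᵢ(t)) e^{μᵢ t}` satisfy
`xᵢ'(t) ≥ (μᵢ - dᵢ(t)) xᵢ(t) + ∑ⱼ qᵢⱼ(t) xⱼ(t) - κᵢ(t) xᵢ(t - rᵢ)` with `qᵢⱼ ≥ 0` and
`0 ≤ κᵢ ≤ μᵢ - dᵢ` as long as `xᵢ(t - rᵢ) ≥ 0`. If all `xᵢ` are nonnegative and nondecreasing up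
to time `T`, then on an interval after `T` shorter than every delay `xᵢ(t - rᵢ) ≤ xᵢ(T)`, so the
differences `xᵢ - xᵢ(T)` solve a cooperative linear differential inequality and stay nonnegative;
this in turn gives `xᵢ' ≥ 0`. The method of steps then covers all `t ≥ 0`.
-/

section CooperativeInequalities

variable {ι : Type*} {S T : ℝ}

lemma eventually_gt_of_hasDerivWithinAt_pos {f : ℝ → ℝ} {f' t : ℝ}
    (hf : HasDerivWithinAt f f' (Ici t) t) (hf' : 0 < f') : ∀ᶠ s in 𝓝[>] t, f t < f s := by
  have hslope := (hasDerivWithinAt_iff_tendsto_slope' self_notMem_Ioi).1 hf.Ioi_of_Ici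
  filter_upwards [hslope.eventually (lt_mem_nhds hf'), self_mem_nhdsWithin] with s hs hts
  exact (slope_pos_iff_of_le (le_of_lt hts)).1 hs

lemma nonneg_of_deriv_right_pos_of_eq_zero [Finite ι] {f f' : ι → ℝ → ℝ}
    (hf : ∀ i, ContinuousOn (f i) (Icc S T))
    (hf' : ∀ i, ∀ t ∈ Ico S T, HasDerivWithinAt (f i) (f' i t) (Ici t) t)
    (hS : ∀ i, 0 ≤ f i S)
    (hpos : ∀ t ∈ Ico S T, (∀ j, 0 ≤ f j t) → ∀ i, f i t = 0 → 0 < f' i t) :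
    ∀ t ∈ Icc S T, ∀ i, 0 ≤ f i t := by
  have hclosed : IsClosed ({t | ∀ i, 0 ≤ f i t} ∩ Icc S T) := by
    rw [inter_comm]
    exact (continuousOn_pi.2 hf).preimage_isClosed_of_isClosed isClosed_Icc
      (isClosed_Ici (a := (0 : ι → ℝ)))
  refine hclosed.Icc_subset_of_forall_mem_nhdsWithin hS ?_
  rintro t ⟨hft, ht⟩
  refine eventually_all.2 fun i => ?_
  rcases (hft i).lt_or_eq with hlt | heq
  · have hcont : ContinuousWithinAt (f i) (Ioi t) t :=
      (hf' i t ht).continuousWithinAt.mono Ioi_subset_Ici_self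
    exact (hcont.eventually (lt_mem_nhds hlt)).mono fun s hs => le_of_lt hs
  · filter_upwards [eventually_gt_of_hasDerivWithinAt_pos (hf' i t ht) (hpos t ht hft i heq.symm)]
      with s hs
    exact heq.trans_le hs.le

lemma nonneg_of_monotoneOn_Icc {f : ℝ → ℝ} {t : ℝ} (hf : MonotoneOn f (Icc S T)) (hS : 0 ≤ f S)
    (ht : t ∈ Icc S T) : 0 ≤ f t :=
  hS.trans (hf (left_mem_Icc.2 (ht.1.trans ht.2)) ht ht.1)

lemma monotoneOn_of_deriv_right_nonneg {f f' : ℝ → ℝ} (hf : ContinuousOn f (Icc S T))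
    (hf' : ∀ t ∈ Ico S T, HasDerivWithinAt f (f' t) (Ici t) t)
    (hnonneg : ∀ t ∈ Ico S T, 0 ≤ f' t) : MonotoneOn f (Icc S T) := by
  intro s hs t ht hst
  exact image_le_of_deriv_right_le_deriv_boundary (f := fun _ => f s) (f' := fun _ => 0)
    continuousOn_const (fun _ _ => hasDerivWithinAt_const _ _ _) le_rfl
    (hf.mono (Icc_subset_Icc_left hs.1)) (fun u hu => hf' u ⟨hs.1.trans hu.1, hu.2⟩)
    (fun u hu => hnonneg u ⟨hs.1.trans hu.1, hu.2⟩) ⟨hst, ht.2⟩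

variable [Fintype ι]

lemma add_mul_exp_nonneg_of_cooperative {u u' p : ι → ℝ → ℝ} {q : ι → ι → ℝ → ℝ} {M ε : ℝ}
    (hu : ∀ i, ContinuousOn (u i) (Icc S T))
    (hu' : ∀ i, ∀ t ∈ Ico S T, HasDerivWithinAt (u i) (u' i t) (Ici t) t)
    (hq : ∀ i j, ∀ t ∈ Ico S T, 0 ≤ q i j t)
    (hM : ∀ i, ∀ t ∈ Ico S T, p i t + ∑ j, q i j t ≤ M)
    (hS : ∀ i, 0 ≤ u i S)
    (hle : ∀ i, ∀ t ∈ Ico S T, p i t * u i t + ∑ j, q i j t * u j t ≤ u' i t) (hε : 0 < ε) :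
    ∀ t ∈ Icc S T, ∀ i, 0 ≤ u i t + ε * Real.exp ((M + 1) * t) := by
  have hexp (t : ℝ) : HasDerivAt (fun t => ε * Real.exp ((M + 1) * t))
      ((M + 1) * (ε * Real.exp ((M + 1) * t))) t := by
    refine ((((hasDerivAt_id t).const_mul (M + 1)).exp).const_mul ε).congr_deriv ?_
    simp only [id]
    ring
  -- Since `M + 1` exceeds every row sum, a perturbed component increases wherever it vanishes.
  refine nonneg_of_deriv_right_pos_of_eq_zero (fun i => (hu i).add (by fun_prop))
    (fun i t ht => (hu' i t ht).add (hexp t).hasDerivWithinAt)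
    (fun i => add_nonneg (hS i) (by positivity)) fun t ht hnonneg i hzero => ?_
  set e := ε * Real.exp ((M + 1) * t)
  have he_pos : 0 < e := by positivity
  have hui : u i t = -e := by linarith
  have hsum : (∑ j, q i j t) * -e ≤ ∑ j, q i j t * u j t := by
    rw [Finset.sum_mul]
    exact Finset.sum_le_sum fun j _ =>
      mul_le_mul_of_nonneg_left (neg_le_iff_add_nonneg.2 (hnonneg j)) (hq i j t ht)
  calc 0 < e := he_pos
    _ ≤ e + (M - (p i t + ∑ j, q i j t)) * e :=
        le_add_of_nonneg_right (mul_nonneg (sub_nonneg.2 (hM i t ht)) he_pos.le)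
    _ = p i t * -e + (∑ j, q i j t) * -e + (M + 1) * e := by ring
    _ ≤ u' i t + (M + 1) * e := by linarith [hui ▸ hle i t ht]

lemma nonneg_of_cooperative {u u' p : ι → ℝ → ℝ} {q : ι → ι → ℝ → ℝ} {M : ℝ}
    (hu : ∀ i, ContinuousOn (u i) (Icc S T))
    (hu' : ∀ i, ∀ t ∈ Ico S T, HasDerivWithinAt (u i) (u' i t) (Ici t) t)
    (hq : ∀ i j, ∀ t ∈ Ico S T, 0 ≤ q i j t)
    (hM : ∀ i, ∀ t ∈ Ico S T, p i t + ∑ j, q i j t ≤ M)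
    (hS : ∀ i, 0 ≤ u i S)
    (hle : ∀ i, ∀ t ∈ Ico S T, p i t * u i t + ∑ j, q i j t * u j t ≤ u' i t) :
    ∀ t ∈ Icc S T, ∀ i, 0 ≤ u i t := by
  intro t ht i
  refine le_of_forall_pos_le_add fun δ hδ => ?_
  have hperturbed := add_mul_exp_nonneg_of_cooperative hu hu' hq hM hS hle
    (div_pos hδ (Real.exp_pos ((M + 1) * t))) t ht i
  rwa [div_mul_cancel₀ _ (Real.exp_ne_zero _)] at hperturbed

end CooperativeInequalities

/-- The functions `xᵢ`, with right derivatives `xᵢ'`, satisfy for `t ≥ 0` the cooperative delay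
differential inequality `xᵢ'(t) ≥ pᵢ(t) xᵢ(t) + ∑ⱼ qᵢⱼ(t) xⱼ(t) - κᵢ(t) xᵢ(t - rᵢ)`, in which the
delayed feedback is dominated by the instantaneous growth: `κᵢ ≤ pᵢ`. The inequality is demanded
only at those times `t` for which `xᵢ(t - rᵢ) ≥ 0`. -/
structure CooperativeDelayIneq {ι : Type*} [Fintype ι] (p κ : ι → ℝ → ℝ) (q : ι → ι → ℝ → ℝ)
    (r : ι → ℝ) (x x' : ι → ℝ → ℝ) : Prop where
  delay_pos : ∀ i, 0 < r i
  continuous_p : ∀ i, Continuous (p i)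
  continuous_q : ∀ i j, Continuous (q i j)
  q_nonneg : ∀ i j t, 0 ≤ q i j t
  κ_nonneg : ∀ i t, 0 ≤ κ i t
  κ_le_p : ∀ i t, κ i t ≤ p i t
  continuousOn : ∀ i, ContinuousOn (x i) (Ici (-r i))
  hasDerivWithinAt : ∀ i t, 0 ≤ t → HasDerivWithinAt (x i) (x' i t) (Ici t) t
  le_deriv : ∀ i t, 0 ≤ t → 0 ≤ x i (t - r i) →
    p i t * x i t + ∑ j, q i j t * x j t - κ i t * x i (t - r i) ≤ x' i t

namespace CooperativeDelayIneq

variable {ι : Type*} [Fintype ι] {p κ x x' : ι → ℝ → ℝ} {q : ι → ι → ℝ → ℝ} {r : ι → ℝ} {T T' : ℝ}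

lemma exists_coeff_bound (h : CooperativeDelayIneq p κ q r x x') (T T' : ℝ) :
    ∃ M, ∀ i, ∀ t ∈ Icc T T', p i t + ∑ j, q i j t ≤ M := by
  have hcont : Continuous fun t i => p i t + ∑ j, q i j t :=
    continuous_pi fun i => (h.continuous_p i).add
      (continuous_finsetSum _ fun j _ => h.continuous_q i j)
  obtain ⟨M, hM⟩ := isCompact_Icc.exists_bound_of_continuousOn (s := Icc T T') hcont.continuousOn
  exact ⟨M, fun i t ht => (le_abs_self _).trans ((norm_le_pi_norm _ i).trans (hM t ht))⟩

lemma le_deriv_of_monotoneOn (h : CooperativeDelayIneq p κ q r x x') (hx₀ : ∀ i, 0 ≤ x i (-r i))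
    (hT : 0 ≤ T) (hT' : ∀ i, T' ≤ T + r i) (hmono : ∀ i, MonotoneOn (x i) (Icc (-r i) T))
    (i : ι) {t : ℝ} (ht : t ∈ Ico T T') :
    p i t * x i t + ∑ j, q i j t * x j t - κ i t * x i T ≤ x' i t := by
  have hdelayed : t - r i ∈ Icc (-r i) T :=
    ⟨by linarith [ht.1], by linarith [ht.2, hT' i]⟩
  have hxT : x i (t - r i) ≤ x i T :=
    hmono i hdelayed (right_mem_Icc.2 (hdelayed.1.trans hdelayed.2)) hdelayed.2
  have hx' := h.le_deriv i t (hT.trans ht.1) (nonneg_of_monotoneOn_Icc (hmono i) (hx₀ i) hdelayed)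
  linarith [mul_le_mul_of_nonneg_left hxT (h.κ_nonneg i t)]

lemma apply_left_le_of_monotoneOn (h : CooperativeDelayIneq p κ q r x x')
    (hx₀ : ∀ i, 0 ≤ x i (-r i))
    (hT : 0 ≤ T) (hT' : ∀ i, T' ≤ T + r i) (hmono : ∀ i, MonotoneOn (x i) (Icc (-r i) T)) :
    ∀ t ∈ Icc T T', ∀ i, x i T ≤ x i t := by
  have hrT (i : ι) : -r i ≤ T := by linarith [h.delay_pos i]
  have hxT (i : ι) : 0 ≤ x i T :=
    nonneg_of_monotoneOn_Icc (hmono i) (hx₀ i) (right_mem_Icc.2 (hrT i))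
  obtain ⟨M, hM⟩ := h.exists_coeff_bound T T'
  have hdiff := nonneg_of_cooperative (u := fun i t => x i t - x i T) (u' := x') (p := p) (q := q)
    (fun i => ((h.continuousOn i).mono fun t ht => (hrT i).trans ht.1).sub continuousOn_const)
    (fun i t ht => (h.hasDerivWithinAt i t (hT.trans ht.1)).sub_const _)
    (fun i j t _ => h.q_nonneg i j t) (fun i t ht => hM i t (Ico_subset_Icc_self ht))
    (fun i => (sub_self _).ge) fun i t ht => ?_
  · exact fun t ht i => sub_nonneg.1 (hdiff t ht i)
  have hx' := h.le_deriv_of_monotoneOn hx₀ hT hT' hmono i ht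
  have hκ : κ i t * x i T ≤ p i t * x i T := mul_le_mul_of_nonneg_right (h.κ_le_p i t) (hxT i)
  have hsum : 0 ≤ ∑ j, q i j t * x j T :=
    Finset.sum_nonneg fun j _ => mul_nonneg (h.q_nonneg i j t) (hxT j)
  simp only [mul_sub, Finset.sum_sub_distrib]
  linarith

lemma monotoneOn_step (h : CooperativeDelayIneq p κ q r x x') (hx₀ : ∀ i, 0 ≤ x i (-r i))
    (hT : 0 ≤ T) (hTT' : T ≤ T') (hT' : ∀ i, T' ≤ T + r i)
    (hmono : ∀ i, MonotoneOn (x i) (Icc (-r i) T)) (i : ι) :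
    MonotoneOn (x i) (Icc (-r i) T') := by
  have hrT (i : ι) : -r i ≤ T := by linarith [h.delay_pos i]
  have hxT (i : ι) : 0 ≤ x i T :=
    nonneg_of_monotoneOn_Icc (hmono i) (hx₀ i) (right_mem_Icc.2 (hrT i))
  have hafter : MonotoneOn (x i) (Icc T T') := by
    refine monotoneOn_of_deriv_right_nonneg
      ((h.continuousOn i).mono fun t ht => (hrT i).trans ht.1)
      (fun t ht => h.hasDerivWithinAt i t (hT.trans ht.1)) fun t ht => ?_
    have hxt (j : ι) : x j T ≤ x j t :=
      h.apply_left_le_of_monotoneOn hx₀ hT hT' hmono t (Ico_subset_Icc_self ht) j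
    have hκ : κ i t * x i T ≤ p i t * x i t :=
      mul_le_mul (h.κ_le_p i t) (hxt i) (hxT i) ((h.κ_nonneg i t).trans (h.κ_le_p i t))
    have hsum : 0 ≤ ∑ j, q i j t * x j t :=
      Finset.sum_nonneg fun j _ => mul_nonneg (h.q_nonneg i j t) ((hxT j).trans (hxt j))
    linarith [h.le_deriv_of_monotoneOn hx₀ hT hT' hmono i ht]
  rw [← Icc_union_Icc_eq_Icc (hrT i) hTT']
  exact (hmono i).union_right hafter (isGreatest_Icc (hrT i)) (isLeast_Icc hTT')

theorem monotoneOn_Ici (h : CooperativeDelayIneq p κ q r x x') (hx₀ : ∀ i, 0 ≤ x i (-r i))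
    (hinit : ∀ i, MonotoneOn (x i) (Icc (-r i) 0)) (i : ι) : MonotoneOn (x i) (Ici (-r i)) := by
  have : Nonempty ι := ⟨i⟩
  obtain ⟨k, hk⟩ := Finite.exists_min r
  have hsteps (n : ℕ) : ∀ i, MonotoneOn (x i) (Icc (-r i) (n * r k)) := by
    induction n with
    | zero => simpa only [Nat.cast_zero, zero_mul] using hinit
    | succ n ih =>
      have hstep : ((n + 1 : ℕ) : ℝ) * r k = n * r k + r k := by push_cast; ring
      rw [hstep]
      exact h.monotoneOn_step hx₀ (mul_nonneg n.cast_nonneg (h.delay_pos k).le)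
        (le_add_of_nonneg_right (h.delay_pos k).le) (fun j => by gcongr; exact hk j) ih
  intro s hs t ht hst
  obtain ⟨n, hn⟩ := Archimedean.arch t (h.delay_pos k)
  rw [nsmul_eq_mul] at hn
  exact hsteps n i ⟨hs, hst.trans hn⟩ ⟨ht, hn⟩ hst

end CooperativeDelayIneq

section ExponentialOrder

variable {m : ℕ} {r μ : Fin m → ℝ} {y z : ℝ → Fin m → ℝ}

/-- The weighted difference `(zᵢ(t) - yᵢ(t)) e^{μᵢ t}`, whose monotonicity expresses the exponential
order between the segments of `y` and `z`. -/
def expDiff (μ : Fin m → ℝ) (y z : ℝ → Fin m → ℝ) (i : Fin m) (t : ℝ) : ℝ :=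
  (z t i - y t i) * Real.exp (μ i * t)

lemma expDiff_nonneg_iff {i : Fin m} {t : ℝ} : 0 ≤ expDiff μ y z i t ↔ y t i ≤ z t i :=
  (mul_nonneg_iff_of_pos_right (Real.exp_pos _)).trans sub_nonneg

lemma expDiff_add (i : Fin m) (t s : ℝ) :
    expDiff μ y z i (t + s) =
      (z (t + s) i - y (t + s) i) * Real.exp (μ i * s) * Real.exp (μ i * t) := by
  rw [expDiff, mul_add, Real.exp_add]
  ring

lemma expLeN_segN_iff (hr : ∀ i, 0 < r i) {t : ℝ} :
    expLeN μ (segN r y t) (segN r z t) ↔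
      ∀ i, 0 ≤ expDiff μ y z i (t - r i) ∧ MonotoneOn (expDiff μ y z i) (Icc (t - r i) t) := by
  have hweight (i : Fin m) (s s' : ℝ) : expDiff μ y z i (t + s) ≤ expDiff μ y z i (t + s') ↔
      (z (t + s) i - y (t + s) i) * Real.exp (μ i * s) ≤
        (z (t + s') i - y (t + s') i) * Real.exp (μ i * s') := by
    rw [expDiff_add, expDiff_add, mul_le_mul_iff_left₀ (Real.exp_pos _)]
  constructor
  · rintro ⟨hle, hexp⟩ i
    refine ⟨expDiff_nonneg_iff.2 (hle i (ptnegN r hr i)), fun s hs s' hs' hss' => ?_⟩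
    have := (hweight i (s - t) (s' - t)).2
      (hexp i ⟨s - t, by linarith [hs.1], by linarith [hs.2]⟩
        ⟨s' - t, by linarith [hs'.1], by linarith [hs'.2]⟩ (sub_le_sub_right hss' t))
    simpa only [add_sub_cancel] using this
  · intro h
    have hmem {i : Fin m} (s : Icc (-r i) (0 : ℝ)) : t + s ∈ Icc (t - r i) t :=
      ⟨by linarith [s.2.1], by linarith [s.2.2]⟩
    refine ⟨fun i s => ?_, fun i s s' hss' => ?_⟩
    · exact expDiff_nonneg_iff.1
        (nonneg_of_monotoneOn_Icc (h i).2 (h i).1 (hmem s))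
    · exact (hweight i s s').1 ((h i).2 (hmem s) (hmem s') (by gcongr))

end ExponentialOrder

section Nonlinearity

lemma neg_exp_neg_two_le_one_sub_mul_exp_neg (s : ℝ) :
    -Real.exp (-2) ≤ (1 - s) * Real.exp (-s) := by
  -- The minimum of `(1 - s) e⁻ˢ` is attained at `s = 2`, hence the tangent of `exp (s - 2)` there.
  have htangent : s - 1 ≤ Real.exp (s - 2) := by linarith [Real.add_one_le_exp (s - 2)]
  have hexp : Real.exp (s - 2) * Real.exp (-s) = Real.exp (-2) := by
    rw [← Real.exp_add]
    ring_nf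
  linarith [mul_le_mul_of_nonneg_right htangent (Real.exp_pos (-s)).le]

lemma neg_exp_neg_two_mul_sub_le_ricker_sub (c : ℝ) {u v : ℝ} (huv : u ≤ v) :
    -Real.exp (-2) * (v - u) ≤ v * Real.exp (-(c * v)) - u * Real.exp (-(c * u)) := by
  have hderiv (x : ℝ) : HasDerivAt (fun x => x * Real.exp (-(c * x)))
      ((1 - c * x) * Real.exp (-(c * x))) x := by
    refine ((hasDerivAt_id x).mul ((hasDerivAt_id x).const_mul c).neg.exp).congr_deriv ?_
    simp only [id, Pi.neg_apply]
    ring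
  exact mul_sub_le_image_sub_of_le_deriv (fun x => (hderiv x).differentiableAt)
    (fun x => (neg_exp_neg_two_le_one_sub_mul_exp_neg _).trans_eq (hderiv x).deriv.symm) huv

variable {m : ℕ} {d β c : Fin m → ℝ → ℝ} {a : Fin m → Fin m → ℝ → ℝ} {r μ : Fin m → ℝ}
  {i : Fin m} {t : ℝ}

lemma le_fN_sub_fN (hr : ∀ i, 0 < r i) (hβ : 0 ≤ β i t) {φ ψ : XN m r}
    (hle : φ i (ptnegN r hr i) ≤ ψ i (ptnegN r hr i)) :
    -d i t * (ψ i (pt0N r hr i) - φ i (pt0N r hr i)) +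
        ∑ j, a i j t * (ψ j (pt0N r hr j) - φ j (pt0N r hr j)) -
        β i t * Real.exp (-2) * (ψ i (ptnegN r hr i) - φ i (ptnegN r hr i)) ≤
      fN d a β c r hr i t ψ - fN d a β c r hr i t φ := by
  have hdelayed :=
    mul_le_mul_of_nonneg_left (neg_exp_neg_two_mul_sub_le_ricker_sub (c i t) hle) hβ
  simp only [fN, mul_sub, Finset.sum_sub_distrib] at hdelayed ⊢
  linarith

theorem neg_mul_sub_le_fN_sub_fN (hr : ∀ i, 0 < r i) (ha : ∀ j, 0 ≤ a i j t) (hβ : 0 ≤ β i t)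
    (hμ : d i t + β i t * Real.exp (μ i * r i - 2) ≤ μ i) {φ ψ : XN m r}
    (hφψ : expLeN μ φ ψ) :
    -μ i * (ψ i (pt0N r hr i) - φ i (pt0N r hr i)) ≤
      fN d a β c r hr i t ψ - fN d a β c r hr i t φ := by
  obtain ⟨hle, hexp⟩ := hφψ
  set w₀ := ψ i (pt0N r hr i) - φ i (pt0N r hr i)
  set w := ψ i (ptnegN r hr i) - φ i (ptnegN r hr i)
  have hw : w * Real.exp (μ i * -r i) ≤ w₀ :=
    calc w * Real.exp (μ i * -r i)
        ≤ w₀ * Real.exp (μ i * 0) := hexp i (ptnegN r hr i) (pt0N r hr i) (neg_nonpos.2 (hr i).le)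
      _ = w₀ := by rw [mul_zero, Real.exp_zero, mul_one]
  have hdelayed : β i t * Real.exp (-2) * w ≤ β i t * Real.exp (μ i * r i - 2) * w₀ :=
    calc β i t * Real.exp (-2) * w
        = β i t * Real.exp (μ i * r i - 2) * (w * Real.exp (μ i * -r i)) := by
          rw [show (-2 : ℝ) = (μ i * r i - 2) + μ i * -r i by ring, Real.exp_add]
          ring
      _ ≤ β i t * Real.exp (μ i * r i - 2) * w₀ := by gcongr
  have hcoupling : 0 ≤ ∑ j, a i j t * (ψ j (pt0N r hr j) - φ j (pt0N r hr j)) :=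
    Finset.sum_nonneg fun j _ => mul_nonneg (ha j) (sub_nonneg.2 (hle j _))
  have hrate := mul_le_mul_of_nonneg_right hμ (sub_nonneg.2 (hle i (pt0N r hr i)))
  linarith [le_fN_sub_fN (d := d) (a := a) (c := c) hr hβ (hle i (ptnegN r hr i))]

end Nonlinearity

section Solutions

variable {m : ℕ} {d β c : Fin m → ℝ → ℝ} {a : Fin m → Fin m → ℝ → ℝ} {r μ : Fin m → ℝ}
  {φ ψ : XN m r} {y z : ℝ → Fin m → ℝ}

lemma SolN.segN_zero (hy : SolN d a β c r φ y) : segN r y 0 = φ := by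
  funext i s
  rw [segN, zero_add]
  exact hy.2.1 i s

lemma rhs_eq_fN_segN (hr : ∀ i, 0 < r i) (i : Fin m) (t : ℝ) (y : ℝ → Fin m → ℝ) :
    rhs d a β c r i t y = fN d a β c r hr i t (segN r y t) := by
  simp only [rhs, fN, segN, pt0N, ptnegN, add_zero, sub_eq_add_neg]

lemma sum_mul_exp_mul_expDiff (i : Fin m) (t : ℝ) :
    ∑ j, a i j t * Real.exp ((μ i - μ j) * t) * expDiff μ y z j t =
      (∑ j, a i j t * (z t j - y t j)) * Real.exp (μ i * t) := by
  rw [Finset.sum_mul]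
  refine Finset.sum_congr rfl fun j _ => ?_
  rw [show μ i * t = (μ i - μ j) * t + μ j * t by ring, Real.exp_add, expDiff]
  ring

lemma le_deriv_expDiff (hr : ∀ i, 0 < r i) {i : Fin m} {t : ℝ} (hβ : 0 ≤ β i t)
    (hdelayed : 0 ≤ expDiff μ y z i (t - r i)) :
    (μ i - d i t) * expDiff μ y z i t +
        ∑ j, a i j t * Real.exp ((μ i - μ j) * t) * expDiff μ y z j t -
        β i t * Real.exp (μ i * r i - 2) * expDiff μ y z i (t - r i) ≤
      (rhs d a β c r i t z - rhs d a β c r i t y + μ i * (z t i - y t i)) *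
        Real.exp (μ i * t) := by
  have hrhs : -d i t * (z t i - y t i) + ∑ j, a i j t * (z t j - y t j) -
      β i t * Real.exp (-2) * (z (t - r i) i - y (t - r i) i) ≤
      rhs d a β c r i t z - rhs d a β c r i t y := by
    have := le_fN_sub_fN (d := d) (a := a) (c := c) (φ := segN r y t) (ψ := segN r z t) hr hβ
      (expDiff_nonneg_iff.1 hdelayed)
    rw [rhs_eq_fN_segN hr, rhs_eq_fN_segN hr]
    simpa only [segN, pt0N, ptnegN, add_zero, sub_eq_add_neg] using this
  have hexp : Real.exp (μ i * r i - 2) * Real.exp (μ i * (t - r i)) =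
      Real.exp (-2) * Real.exp (μ i * t) := by
    rw [← Real.exp_add, ← Real.exp_add]
    ring_nf
  rw [sum_mul_exp_mul_expDiff, expDiff, expDiff]
  linear_combination mul_le_mul_of_nonneg_right hrhs (Real.exp_pos (μ i * t)).le -
    β i t * (z (t - r i) i - y (t - r i) i) * hexp

lemma cooperativeDelayIneq_expDiff (hr : ∀ i, 0 < r i) (hd : ∀ i, Continuous (d i))
    (ha : ∀ i j, Continuous (a i j)) (ha_nonneg : ∀ i j t, 0 ≤ a i j t)
    (hβ : ∀ i t, 0 ≤ β i t) (hμ : ∀ i t, d i t + β i t * Real.exp (μ i * r i - 2) ≤ μ i)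
    (hy : SolN d a β c r φ y) (hz : SolN d a β c r ψ z) :
    CooperativeDelayIneq (fun i t => μ i - d i t) (fun i t => β i t * Real.exp (μ i * r i - 2))
      (fun i j t => a i j t * Real.exp ((μ i - μ j) * t)) r (expDiff μ y z)
      (fun i t => (rhs d a β c r i t z - rhs d a β c r i t y + μ i * (z t i - y t i)) *
        Real.exp (μ i * t)) where
  delay_pos := hr
  continuous_p i := continuous_const.sub (hd i)
  continuous_q i j := (ha i j).mul (by fun_prop)
  q_nonneg i j t := mul_nonneg (ha_nonneg i j t) (Real.exp_pos _).le
  κ_nonneg i t := mul_nonneg (hβ i t) (Real.exp_pos _).le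
  κ_le_p i t := le_sub_iff_add_le'.2 (hμ i t)
  continuousOn i := ((hz.1 i).sub (hy.1 i)).mul (by fun_prop)
  hasDerivWithinAt i t ht := by
    refine (((hz.2.2 i t ht).sub (hy.2.2 i t ht)).mul
      (((hasDerivAt_id t).const_mul (μ i)).exp).hasDerivWithinAt).congr_deriv ?_
    simp only [Pi.sub_apply, id]
    ring
  le_deriv i t _ hdelayed := le_deriv_expDiff hr (hβ i t) hdelayed

theorem expLeN_segN_of_expLeN (hr : ∀ i, 0 < r i) (hd : ∀ i, Continuous (d i))
    (ha : ∀ i j, Continuous (a i j)) (ha_nonneg : ∀ i j t, 0 ≤ a i j t)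
    (hβ : ∀ i t, 0 ≤ β i t) (hμ : ∀ i t, d i t + β i t * Real.exp (μ i * r i - 2) ≤ μ i)
    (hy : SolN d a β c r φ y) (hz : SolN d a β c r ψ z) (hφψ : expLeN μ φ ψ) {t : ℝ}
    (ht : 0 ≤ t) : expLeN μ (segN r y t) (segN r z t) := by
  rw [← hy.segN_zero, ← hz.segN_zero, expLeN_segN_iff hr] at hφψ
  simp only [zero_sub] at hφψ
  have hmono := (cooperativeDelayIneq_expDiff hr hd ha ha_nonneg hβ hμ hy hz).monotoneOn_Ici
    (fun i => (hφψ i).1) fun i => (hφψ i).2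
  refine (expLeN_segN_iff hr).2 fun i => ?_
  have hshift : -r i ≤ t - r i := by linarith
  exact ⟨(hφψ i).1.trans (hmono i self_mem_Ici hshift hshift),
    (hmono i).mono fun s hs => hshift.trans hs.1⟩

end Solutions

section Exponents

lemma AlmostPeriodic.bddAbove_range {f : ℝ → ℝ} (hf : AlmostPeriodic f) : BddAbove (range f) := by
  obtain ⟨hcont, hperiods⟩ := hf
  obtain ⟨L, -, hL⟩ := hperiods 1 one_pos
  obtain ⟨C, hC⟩ := (isCompact_Icc (a := 0) (b := L)).bddAbove_image hcont.continuousOn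
  refine ⟨C + 1, forall_mem_range.2 fun t => ?_⟩
  obtain ⟨s, hs, hst⟩ := hL (-t)
  have hbound : f (t + s) ≤ C :=
    hC (mem_image_of_mem f ⟨by linarith [hs.1], by linarith [hs.2]⟩)
  linarith [(abs_lt.1 (hst t)).1]

lemma le_supR {f : ℝ → ℝ} (hf : BddAbove (range f)) (t : ℝ) : f t ≤ supR f :=
  le_csSup hf (mem_range_self t)

variable {m : ℕ} {d β : Fin m → ℝ → ℝ} {r : Fin m → ℝ} {i : Fin m}

lemma muN_mul_delay (hr : 0 < r i) :
    muN r β i * r i = Real.log (Real.exp 2 / (r i * supR (β i))) := by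
  rw [muN]
  field_simp

lemma exp_muN_mul_delay_sub_two (hr : 0 < r i) (hβ : 0 < supR (β i)) :
    Real.exp (muN r β i * r i - 2) = 1 / (r i * supR (β i)) := by
  rw [muN_mul_delay hr, Real.exp_sub, Real.exp_log (by positivity)]
  field_simp

lemma supR_add_one_div_delay_le_muN (hr : 0 < r i) (hβ : 0 < supR (β i))
    (hcond : r i * supR (β i) * Real.exp (supR (d i) * r i) ≤ Real.exp 1) :
    supR (d i) + 1 / r i ≤ muN r β i := by
  have hlog := Real.log_le_log (by positivity) hcond
  rw [Real.log_mul (by positivity) (by positivity), Real.log_exp, Real.log_exp] at hlog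
  refine le_of_mul_le_mul_right ?_ hr
  rw [muN_mul_delay hr, Real.log_div (by positivity) (by positivity), Real.log_exp, add_mul,
    one_div_mul_cancel hr.ne']
  linarith

lemma add_mul_exp_muN_le_muN (hr : 0 < r i) (hd : BddAbove (range (d i)))
    (hβ : BddAbove (range (β i))) {t : ℝ} (hβ_pos : 0 < β i t)
    (hcond : r i * supR (β i) * Real.exp (supR (d i) * r i) ≤ Real.exp 1) :
    d i t + β i t * Real.exp (muN r β i * r i - 2) ≤ muN r β i := by
  have hsup_pos : 0 < supR (β i) := hβ_pos.trans_le (le_supR hβ t)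
  calc d i t + β i t * Real.exp (muN r β i * r i - 2)
      ≤ supR (d i) + supR (β i) * Real.exp (muN r β i * r i - 2) := by
        gcongr
        exacts [le_supR hd t, le_supR hβ t]
    _ = supR (d i) + 1 / r i := by
        rw [exp_muN_mul_delay_sub_two hr hsup_pos]
        field_simp
    _ ≤ muN r β i := supR_add_one_div_delay_le_muN hr hsup_pos hcond

end Exponents

theorem statement15_general {m : ℕ} {d β : Fin m → ℝ → ℝ} {a : Fin m → Fin m → ℝ → ℝ}
    (c : Fin m → ℝ → ℝ) {r : Fin m → ℝ} (hr : ∀ i, 0 < r i)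
    (hd : ∀ i, Continuous (d i)) (hd_nonneg : ∀ i t, 0 ≤ d i t)
    (hd_bdd : ∀ i, BddAbove (range (d i)))
    (ha : ∀ i j, Continuous (a i j)) (ha_nonneg : ∀ i j t, 0 ≤ a i j t)
    (hβ_pos : ∀ i t, 0 < β i t) (hβ_bdd : ∀ i, BddAbove (range (β i)))
    (hcond : ∀ i, r i * supR (β i) * Real.exp (supR (d i) * r i) ≤ Real.exp 1) :
    (∀ i, 0 < muN r β i) ∧
    (∀ (t : ℝ) (φ ψ : XN m r), expLeN (muN r β) φ ψ →
      ∀ i, -(muN r β i) * (ψ i (pt0N r hr i) - φ i (pt0N r hr i)) ≤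
        fN d a β c r hr i t ψ - fN d a β c r hr i t φ) ∧
    ∀ φ ψ : XN m r, expLeN (muN r β) φ ψ →
      ∀ y z : ℝ → Fin m → ℝ, SolN d a β c r φ y → SolN d a β c r ψ z →
        ∀ t, 0 ≤ t → expLeN (muN r β) (segN r y t) (segN r z t) := by
  have hμ (i : Fin m) (t : ℝ) : d i t + β i t * Real.exp (muN r β i * r i - 2) ≤ muN r β i :=
    add_mul_exp_muN_le_muN (hr i) (hd_bdd i) (hβ_bdd i) (hβ_pos i t) (hcond i)
  refine ⟨fun i => ?_, fun t φ ψ hφψ i => ?_, fun φ ψ hφψ y z hy hz t ht => ?_⟩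
  · exact (add_pos_of_nonneg_of_pos (hd_nonneg i 0)
      (mul_pos (hβ_pos i 0) (Real.exp_pos _))).trans_le (hμ i 0)
  · exact neg_mul_sub_le_fN_sub_fN hr (fun j => ha_nonneg i j t) (hβ_pos i t).le (hμ i t) hφψ
  · exact expLeN_segN_of_expLeN hr hd ha ha_nonneg (fun i t => (hβ_pos i t).le) hμ hy hz hφψ ht

/-- under `rᵢ βᵢ⁺ e^{dᵢ⁺ rᵢ} ≤ e`, the exponents `μᵢ` are positive and the
Nicholson nonlinearity satisfies the quasimonotone condition for the exponential order;
consequently the solutions are monotone for `≤_B`. -/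
theorem statement15
    {m : ℕ} (hm : 1 ≤ m)
    (d : Fin m → ℝ → ℝ) (a : Fin m → Fin m → ℝ → ℝ) (β c : Fin m → ℝ → ℝ)
    (r : Fin m → ℝ) (hr : ∀ i, 0 < r i)
    (hN : NicholsonHyps m d a β c)
    (hcond : ∀ i, r i * supR (β i) * Real.exp (supR (d i) * r i) ≤ Real.exp 1) :
    (∀ i, 0 < muN r β i) ∧
    (∀ (t : ℝ) (φ ψ : XN m r), expLeN (muN r β) φ ψ →
      ∀ i, -(muN r β i) * (ψ i (pt0N r hr i) - φ i (pt0N r hr i)) ≤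
        fN d a β c r hr i t ψ - fN d a β c r hr i t φ) ∧
    ∀ φ ψ : XN m r, XPos φ → XPos ψ → expLeN (muN r β) φ ψ →
      ∀ y z : ℝ → Fin m → ℝ, SolN d a β c r φ y → SolN d a β c r ψ z →
        ∀ t, 0 ≤ t → expLeN (muN r β) (segN r y t) (segN r z t) := by
  obtain ⟨hd, ha, hβ, -, ⟨d₀, hd₀, hd₀_le⟩, ha_nonneg, -, hβ_pos, -, -⟩ := hN
  obtain ⟨hμ_pos, hquasi, hmono⟩ := statement15_general c hr (fun i => (hd i).1)
    (fun i t => hd₀.le.trans (hd₀_le i t)) (fun i => (hd i).bddAbove_range)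
    (fun i j => (ha i j).1) ha_nonneg hβ_pos (fun i => (hβ i).bddAbove_range) hcond
  exact ⟨hμ_pos, hquasi, fun φ ψ _ _ => hmono φ ψ⟩

end Nicholson
end
end

section
/- Suppose r_i β_i⁺ e^{d_i⁺ r_i} < e for each i = 1,…,m. Then the following two properties of the Nicholson system are equivalent: (a) uniform persistence in Int K̃_B: there exists a Lipschitz ψ ≫_B 0 such that for every Lipschitz φ ≫_B 0 there is t₀ = t₀(φ) with ψ ≤_B y_t(φ) for all t ≥ t₀; (b) uniform persistence in Int X₊: there exists M > 0 such that for every φ ∈ X₊ with φ(0) ≫ 0 there is t₀ = t₀(φ) with y_i(t,φ) ≥ M for all t ≥ t₀ and all i = 1,…,m. -/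
open MeasureTheory Filter Topology Set

noncomputable section

namespace Nicholson

/-!
(b) ⇒ (a): as soon as `y ≥ M`, the equation gives `yᵢ' + μᵢ yᵢ ≥ (μᵢ - dᵢ⁺) M`, so a small constant
function lies below every later segment of `y` in the exponential order.

(a) ⇒ (b): the solution `y` is positive on `[0, ∞)`, so on an interval of the length of the largest
delay both `y` and `y' + μ y` are bounded away from `0`. The solution `z` starting from a small
constant `δ`, which exists because the system truncated at `0` is globally Lipschitz, is as small
as desired there together with `z' + μ z`. Hence `w = y - z` and `w' + μ w` are positive on this
interval. They stay positive: `wᵢ(t - rᵢ) ≤ wᵢ(t) e^{μᵢ rᵢ}` as long as `w' + μ w ≥ 0`, the slope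
of `x e^{-c x}` is at least `-e^{-2}`, and `dᵢ⁺ + βᵢ⁺ e^{μᵢ rᵢ - 2} < μᵢ`. So `y > z` for all times,
and (a) applies to `z` because a positive constant is strongly positive in the exponential order.
-/

lemma exists_pos_lt_forall_mul_lt {ι : Type*} [Finite ι] {b : ℝ} (hb : 0 < b) {v : ι → ℝ}
    (hv : ∀ i, 0 < v i) (L : ι → ℝ) : ∃ η > 0, η < b ∧ ∀ i, L i * η < v i := by
  have hIoo : ∀ᶠ η in 𝓝[>] (0 : ℝ), η ∈ Ioo 0 b := Ioo_mem_nhdsGT hb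
  have hsmall (i : ι) : ∀ᶠ η in 𝓝[>] (0 : ℝ), L i * η < v i :=
    (((continuous_const.mul continuous_id).tendsto' (0 : ℝ) 0 (mul_zero (L i))).eventually_lt_const
      (hv i)).filter_mono nhdsWithin_le_nhds
  obtain ⟨η, ⟨hη, hηb⟩, hL⟩ := (hIoo.and (eventually_all.2 hsmall)).exists
  exact ⟨η, hη, hηb, hL⟩

section ExponentialMonotonicity

lemma hasDerivAt_exp_mul (μ x : ℝ) :
    HasDerivAt (fun s => Real.exp (μ * s)) (Real.exp (μ * x) * μ) x := by
  simpa using ((hasDerivAt_id x).const_mul μ).exp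

lemma monotoneOn_mul_exp_of_rightDeriv {f f' : ℝ → ℝ} {μ a b : ℝ}
    (hf : ContinuousOn f (Icc a b))
    (hf' : ∀ x ∈ Ico a b, HasDerivWithinAt f (f' x) (Ici x) x)
    (h : ∀ x ∈ Ico a b, 0 ≤ f' x + μ * f x) :
    MonotoneOn (fun x => f x * Real.exp (μ * x)) (Icc a b) := by
  intro s hs t ht hst
  have hsub : Icc s t ⊆ Icc a b := Icc_subset_Icc hs.1 ht.2
  have hsub' : Ico s t ⊆ Ico a b := Ico_subset_Ico hs.1 ht.2
  refine image_le_of_deriv_right_le_deriv_boundary (a := s) (b := t)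
    (f := fun _ => f s * Real.exp (μ * s)) (f' := 0) (B := fun x => f x * Real.exp (μ * x))
    (B' := fun x => f' x * Real.exp (μ * x) + f x * (Real.exp (μ * x) * μ))
    continuousOn_const (fun x _ => hasDerivWithinAt_const _ _ _) le_rfl
    ((hf.mono hsub).mul (by fun_prop))
    (fun x hx => (hf' x (hsub' hx)).mul (hasDerivAt_exp_mul μ x).hasDerivWithinAt)
    (fun x hx => ?_) (right_mem_Icc.2 hst)
  calc (0 : ℝ) ≤ (f' x + μ * f x) * Real.exp (μ * x) :=
        mul_nonneg (h x (hsub' hx)) (Real.exp_pos _).le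
    _ = f' x * Real.exp (μ * x) + f x * (Real.exp (μ * x) * μ) := by ring

lemma pos_of_rightDeriv_add_mul_nonneg {f f' : ℝ → ℝ} {μ a b : ℝ} (hab : a ≤ b)
    (hf : ContinuousOn f (Icc a b))
    (hf' : ∀ x ∈ Ico a b, HasDerivWithinAt f (f' x) (Ici x) x)
    (h : ∀ x ∈ Ico a b, 0 ≤ f' x + μ * f x) (ha : 0 < f a) : 0 < f b := by
  have hmono : f a * Real.exp (μ * a) ≤ f b * Real.exp (μ * b) :=
    monotoneOn_mul_exp_of_rightDeriv hf hf' h (left_mem_Icc.2 hab) (right_mem_Icc.2 hab) hab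
  exact pos_of_mul_pos_left ((mul_pos ha (Real.exp_pos _)).trans_le hmono) (Real.exp_pos _).le

lemma mul_exp_le_mul_exp_of_ae_deriv {g : ℝ → ℝ} {μ a b : ℝ} (hab : a ≤ b)
    (hg : AbsolutelyContinuousOnInterval g a b)
    (h : ∀ᵐ x ∂volume.restrict (Ioo a b), 0 ≤ deriv g x + μ * g x) :
    g a * Real.exp (μ * a) ≤ g b * Real.exp (μ * b) := by
  have hexp : AbsolutelyContinuousOnInterval (fun t => Real.exp (μ * t)) a b :=
    ContDiffOn.absolutelyContinuousOnInterval (by fun_prop)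
  rw [← sub_nonneg, ← hg.integral_deriv_mul_eq_sub hexp]
  refine intervalIntegral.integral_nonneg_of_ae_restrict hab ?_
  rw [← Measure.restrict_congr_set Ioo_ae_eq_Icc]
  filter_upwards [h] with x hx
  calc (0 : ℝ) ≤ (deriv g x + μ * g x) * Real.exp (μ * x) := mul_nonneg hx (Real.exp_pos _).le
    _ = deriv g x * Real.exp (μ * x) + g x * deriv (fun t => Real.exp (μ * t)) x := by
        rw [(hasDerivAt_exp_mul μ x).deriv]; ring

end ExponentialMonotonicity

section FirstTime

variable {ι : Type*} [Finite ι] {T : ℝ}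

lemma forall_pos_of_forall_Ico_pos {g : ι → ℝ → ℝ} (hg : ∀ i, ContinuousOn (g i) (Ici T))
    (hstep : ∀ t, T ≤ t → (∀ j, ∀ s ∈ Ico T t, 0 < g j s) → ∀ i, 0 < g i t) :
    ∀ t, T ≤ t → ∀ i, 0 < g i t := by
  by_contra! hcon
  obtain ⟨t₁, ht₁, i₁, hi₁⟩ := hcon
  let S : Set ℝ := ⋃ i, Icc T t₁ ∩ g i ⁻¹' Iic 0
  have hmem {t : ℝ} : t ∈ S ↔ t ∈ Icc T t₁ ∧ ∃ i, g i t ≤ 0 := by simp [S]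
  have hclosed : IsClosed S := isClosed_iUnion_of_finite fun i =>
    ((hg i).mono Icc_subset_Ici_self).preimage_isClosed_of_isClosed isClosed_Icc isClosed_Iic
  have hbdd : BddBelow S := ⟨T, fun t ht => (hmem.1 ht).1.1⟩
  have hinf := hclosed.csInf_mem ⟨t₁, hmem.2 ⟨⟨ht₁, le_rfl⟩, i₁, hi₁⟩⟩ hbdd
  obtain ⟨⟨hT, ht₁⟩, i, hi⟩ := hmem.1 hinf
  refine (hstep (sInf S) hT (fun j s hs => ?_) i).not_ge hi
  by_contra! hj
  exact (csInf_le hbdd (hmem.2 ⟨⟨hs.1, hs.2.le.trans ht₁⟩, j, hj⟩)).not_gt hs.2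

lemma forall_pos_of_rightDeriv_add_mul_nonneg {y y' : ℝ → ι → ℝ} {μ : ι → ℝ}
    (hy : ∀ i, ContinuousOn (fun t => y t i) (Ici T))
    (hy' : ∀ i t, T ≤ t → HasDerivWithinAt (fun s => y s i) (y' t i) (Ici t) t)
    (hT : ∀ i, 0 < y T i)
    (h : ∀ i t, T ≤ t → (∀ s ∈ Icc T t, ∀ j, 0 < y s j) → 0 ≤ y' t i + μ i * y t i) :
    ∀ t, T ≤ t → ∀ i, 0 < y t i :=
  forall_pos_of_forall_Ico_pos hy fun _ ht hpos i =>
    pos_of_rightDeriv_add_mul_nonneg ht ((hy i).mono Icc_subset_Ici_self)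
      (fun x hx => hy' i x hx.1)
      (fun x hx => h i x hx.1 fun s hs j => hpos j s ⟨hs.1, hs.2.trans_lt hx.2⟩) (hT i)

lemma forall_pos_of_delay_rightDeriv_add_mul_nonneg {y y' : ℝ → ι → ℝ} {r μ : ι → ℝ}
    (hr : ∀ i, 0 < r i) (hy : ∀ i, ContinuousOn (fun t => y t i) (Ici (-(r i))))
    (hy' : ∀ i t, 0 ≤ t → HasDerivWithinAt (fun s => y s i) (y' t i) (Ici t) t)
    (hpast : ∀ i, ∀ s ∈ Icc (-(r i)) 0, 0 ≤ y s i) (hzero : ∀ i, 0 < y 0 i)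
    (h : ∀ i t, (∀ j, 0 ≤ y t j) → 0 ≤ y (t - r i) i → 0 ≤ y' t i + μ i * y t i) :
    ∀ t, 0 ≤ t → ∀ i, 0 < y t i := by
  refine forall_pos_of_rightDeriv_add_mul_nonneg
    (fun i => (hy i).mono (Ici_subset_Ici.2 (neg_nonpos.2 (hr i).le))) hy' hzero
    fun i t ht hpos => h i t (fun j => (hpos t ⟨ht, le_rfl⟩ j).le) ?_
  rcases le_total (t - r i) 0 with hle | hge
  · exact hpast i _ ⟨by linarith, hle⟩
  · exact (hpos _ ⟨hge, by linarith [hr i]⟩ i).le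

-- The first-time argument is run on `w' + μ w`, whose positivity propagates that of `w`.
lemma forall_pos_of_expMonotone_imp {w w' : ℝ → ι → ℝ} {μ : ι → ℝ}
    (hw : ∀ i, ContinuousOn (fun t => w t i) (Ici T))
    (hw'cont : ∀ i, ContinuousOn (fun t => w' t i) (Ici T))
    (hw' : ∀ i t, T ≤ t → HasDerivWithinAt (fun s => w s i) (w' t i) (Ici t) t)
    (hT : ∀ i, 0 < w T i)
    (h : ∀ t, T ≤ t → (∀ s ∈ Icc T t, ∀ j, 0 < w s j) →
      (∀ j, MonotoneOn (fun s => w s j * Real.exp (μ j * s)) (Icc T t)) →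
      ∀ i, 0 < w' t i + μ i * w t i) :
    ∀ t, T ≤ t → ∀ i, 0 < w t i := by
  have hpos_of {t : ℝ} (ht : T ≤ t) (hprev : ∀ j, ∀ s ∈ Ico T t, 0 < w' s j + μ j * w s j)
      (i : ι) : 0 < w t i :=
    pos_of_rightDeriv_add_mul_nonneg ht ((hw i).mono Icc_subset_Ici_self)
      (fun x hx => hw' i x hx.1) (fun x hx => (hprev i x hx).le) (hT i)
  have hall : ∀ t, T ≤ t → ∀ i, 0 < w' t i + μ i * w t i := by
    refine forall_pos_of_forall_Ico_pos
      (fun i => (hw'cont i).add (continuousOn_const.mul (hw i))) fun t ht hprev => ?_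
    refine h t ht (fun s hs => hpos_of hs.1 fun j u hu => hprev j u ⟨hu.1, hu.2.trans_le hs.2⟩)
      fun j => ?_
    exact monotoneOn_mul_exp_of_rightDeriv ((hw j).mono Icc_subset_Ici_self)
      (fun x hx => hw' j x hx.1) fun x hx => (hprev j x hx).le
  exact fun t ht => hpos_of ht fun j s hs => hall s hs.1 j

end FirstTime

section Volterra

variable {E : Type*} [NormedAddCommGroup E] {G : ℝ → (ℝ → E) → E} {K : ℝ} {φ x y : ℝ → E}

/-- A Volterra (causal) right-hand side of a functional differential equation
`x' t = G t x`: the value `G t x` depends on `x` only through its past `x|_(-∞,t]`, with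
Lipschitz constant `K` for the supremum norm of the past, and `0` is an equilibrium. -/
structure IsVolterraLipschitz (G : ℝ → (ℝ → E) → E) (K : ℝ) : Prop where
  continuous_apply : ∀ x, Continuous x → Continuous fun t => G t x
  norm_sub_le : ∀ t x y ρ, (∀ s ≤ t, ‖x s - y s‖ ≤ ρ) → ‖G t x - G t y‖ ≤ K * ρ
  map_zero : ∀ t, G t 0 = 0

lemma IsVolterraLipschitz.nonneg (hG : IsVolterraLipschitz G K) : 0 ≤ K := by
  simpa using hG.norm_sub_le 0 0 0 1 (by simp)

/-- The weight `t ↦ e^{2 K t⁺}` of the norm in which the Picard map is a `1/2`-contraction. -/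
def growthWeight (K t : ℝ) : ℝ := Real.exp (2 * K * max t 0)

lemma growthWeight_pos (K t : ℝ) : 0 < growthWeight K t := Real.exp_pos _

lemma continuous_growthWeight (K : ℝ) : Continuous (growthWeight K) := by
  unfold growthWeight; fun_prop

lemma growthWeight_mono (hK : 0 ≤ K) : Monotone (growthWeight K) := fun s t hst => by
  unfold growthWeight; gcongr

lemma one_le_growthWeight (hK : 0 ≤ K) (t : ℝ) : 1 ≤ growthWeight K t :=
  Real.one_le_exp (by positivity)

lemma integral_exp_two_mul_le {ρ : ℝ} (hρ : 0 ≤ ρ) (K T : ℝ) :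
    ∫ s in (0 : ℝ)..T, K * (Real.exp (2 * K * s) * ρ) ≤ Real.exp (2 * K * T) * (ρ / 2) := by
  have hderiv (s : ℝ) : HasDerivAt (fun s => Real.exp (2 * K * s) * (ρ / 2))
      (K * (Real.exp (2 * K * s) * ρ)) s :=
    ((hasDerivAt_exp_mul (2 * K) s).mul_const (ρ / 2)).congr_deriv (by ring)
  rw [intervalIntegral.integral_eq_sub_of_hasDerivAt (fun s _ => hderiv s)
    (Continuous.intervalIntegrable (by fun_prop) _ _)]
  exact sub_le_self _ (by positivity)

variable [NormedSpace ℝ E]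

lemma norm_growthWeight_smul (K t : ℝ) (v : E) :
    ‖growthWeight K t • v‖ = growthWeight K t * ‖v‖ := by
  rw [norm_smul, Real.norm_of_nonneg (growthWeight_pos K t).le]

lemma norm_inv_growthWeight_smul_le_iff {t ρ : ℝ} {v : E} :
    ‖(growthWeight K t)⁻¹ • v‖ ≤ ρ ↔ ‖v‖ ≤ growthWeight K t * ρ := by
  rw [norm_smul, norm_inv, Real.norm_of_nonneg (growthWeight_pos K t).le,
    inv_mul_le_iff₀ (growthWeight_pos K t)]

/-- The Picard map of `x' t = G t x`, `t ≥ 0`, with history `φ` on `(-∞,0]`, defined on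
functions on the whole line. -/
def picardMap (G : ℝ → (ℝ → E) → E) (φ x : ℝ → E) (t : ℝ) : E :=
  φ (min t 0) + ∫ s in (0 : ℝ)..max t 0, G s x

lemma IsVolterraLipschitz.continuous_picardMap (hG : IsVolterraLipschitz G K)
    (hφ : Continuous φ) (hx : Continuous x) : Continuous (picardMap G φ x) := by
  have hprim : Continuous fun t => ∫ s in (0 : ℝ)..t, G s x :=
    intervalIntegral.continuous_primitive
      (fun a b => (hG.continuous_apply x hx).intervalIntegrable a b) 0
  exact (hφ.comp (by fun_prop)).add (hprim.comp (by fun_prop))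

lemma IsVolterraLipschitz.norm_picardMap_sub_le (hG : IsVolterraLipschitz G K)
    (hx : Continuous x) (hy : Continuous y) {ρ : ℝ}
    (hxy : ∀ s, ‖x s - y s‖ ≤ growthWeight K s * ρ) (t : ℝ) :
    ‖picardMap G φ x t - picardMap G φ y t‖ ≤ growthWeight K t * (ρ / 2) := by
  have hρ : 0 ≤ ρ :=
    nonneg_of_mul_nonneg_right ((norm_nonneg _).trans (hxy 0)) (growthWeight_pos K 0)
  have hpointwise : ∀ s ∈ Ioc 0 (max t 0),
      ‖G s x - G s y‖ ≤ K * (Real.exp (2 * K * s) * ρ) := fun s hs => by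
    have hle := hG.norm_sub_le s x y (growthWeight K s * ρ) fun u hu =>
      (hxy u).trans (mul_le_mul_of_nonneg_right (growthWeight_mono hG.nonneg hu) hρ)
    rwa [growthWeight, max_eq_left hs.1.le] at hle
  have hint (z : ℝ → E) (hz : Continuous z) :
      IntervalIntegrable (fun s => G s z) volume 0 (max t 0) :=
    (hG.continuous_apply z hz).intervalIntegrable _ _
  calc ‖picardMap G φ x t - picardMap G φ y t‖
      = ‖∫ s in (0 : ℝ)..max t 0, (G s x - G s y)‖ := by
        rw [intervalIntegral.integral_sub (hint x hx) (hint y hy), picardMap, picardMap,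
          add_sub_add_left_eq_sub]
    _ ≤ ∫ s in (0 : ℝ)..max t 0, K * (Real.exp (2 * K * s) * ρ) :=
        intervalIntegral.norm_integral_le_of_norm_le (le_max_right _ _)
          (Eventually.of_forall hpointwise) (Continuous.intervalIntegrable (by fun_prop) _ _)
    _ ≤ growthWeight K t * (ρ / 2) := integral_exp_two_mul_le hρ K _

lemma IsVolterraLipschitz.norm_picardMap_le (hG : IsVolterraLipschitz G K)
    (hx : Continuous x) {C ρ : ℝ} (hφ : ∀ t, ‖φ t‖ ≤ C)
    (hxρ : ∀ s, ‖x s‖ ≤ growthWeight K s * ρ) (t : ℝ) :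
    ‖picardMap G φ x t‖ ≤ growthWeight K t * (C + ρ / 2) := by
  have hzero : picardMap G φ 0 t = φ (min t 0) := by simp [picardMap, hG.map_zero]
  have hC : 0 ≤ C := (norm_nonneg _).trans (hφ 0)
  calc ‖picardMap G φ x t‖
      ≤ ‖picardMap G φ 0 t‖ + ‖picardMap G φ x t - picardMap G φ 0 t‖ := norm_le_insert' _ _
    _ ≤ C + growthWeight K t * (ρ / 2) := by
        rw [hzero]
        exact add_le_add (hφ _) (hzero ▸ hG.norm_picardMap_sub_le hx continuous_zero
          (by simpa using hxρ) t)
    _ ≤ growthWeight K t * (C + ρ / 2) := by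
        rw [mul_add]
        gcongr
        exact le_mul_of_one_le_left hC (one_le_growthWeight hG.nonneg t)

open scoped BoundedContinuousFunction

/-- The Picard map transported to bounded functions `u` by `x = growthWeight K • u`. -/
def weightedPicardMap (hG : IsVolterraLipschitz G K) (φ u : ℝ →ᵇ E) : ℝ →ᵇ E :=
  BoundedContinuousFunction.ofNormedAddCommGroup
    (fun t => (growthWeight K t)⁻¹ • picardMap G φ (fun s => growthWeight K s • u s) t)
    (((continuous_growthWeight K).inv₀ fun t => (growthWeight_pos K t).ne').smul
      (hG.continuous_picardMap φ.continuous ((continuous_growthWeight K).smul u.continuous)))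
    (‖φ‖ + ‖u‖ / 2) fun t => by
      refine norm_inv_growthWeight_smul_le_iff.2 <| hG.norm_picardMap_le
        ((continuous_growthWeight K).smul u.continuous) φ.norm_coe_le_norm (fun s => ?_) t
      exact (norm_growthWeight_smul K s (u s)).trans_le
        (mul_le_mul_of_nonneg_left (u.norm_coe_le_norm s) (growthWeight_pos K s).le)

lemma contractingWith_weightedPicardMap (hG : IsVolterraLipschitz G K) (φ : ℝ →ᵇ E) :
    ContractingWith (1 / 2) (weightedPicardMap hG φ) := by
  refine ⟨by rw [← NNReal.coe_lt_coe]; norm_num, LipschitzWith.of_dist_le_mul fun u v => ?_⟩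
  have hdist (s : ℝ) :
      ‖growthWeight K s • u s - growthWeight K s • v s‖ ≤ growthWeight K s * dist u v := by
    rw [← smul_sub, norm_growthWeight_smul, ← dist_eq_norm]
    exact mul_le_mul_of_nonneg_left (u.dist_coe_le_dist s) (growthWeight_pos K s).le
  have hhalf : dist (weightedPicardMap hG φ u) (weightedPicardMap hG φ v) ≤ dist u v / 2 := by
    refine (BoundedContinuousFunction.dist_le (by positivity)).2 fun t => ?_
    simp only [weightedPicardMap, BoundedContinuousFunction.coe_ofNormedAddCommGroup]
    rw [dist_eq_norm, ← smul_sub, norm_inv_growthWeight_smul_le_iff]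
    exact hG.norm_picardMap_sub_le ((continuous_growthWeight K).smul u.continuous)
      ((continuous_growthWeight K).smul v.continuous) hdist t
  simpa [div_eq_inv_mul] using hhalf

variable [CompleteSpace E]

lemma IsVolterraLipschitz.exists_eq_picardMap (hG : IsVolterraLipschitz G K) (φ : ℝ →ᵇ E) :
    ∃ x : ℝ → E, Continuous x ∧ (∀ t, ‖x t‖ ≤ growthWeight K t * (2 * ‖φ‖)) ∧
      ∀ t, x t = picardMap G φ x t := by
  obtain ⟨u, hu⟩ : ∃ u, weightedPicardMap hG φ u = u :=
    ⟨_, (contractingWith_weightedPicardMap hG φ).fixedPoint_isFixedPt⟩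
  have hnorm : ‖u‖ ≤ 2 * ‖φ‖ := by
    have hle : ‖weightedPicardMap hG φ u‖ ≤ ‖φ‖ + ‖u‖ / 2 :=
      BoundedContinuousFunction.norm_ofNormedAddCommGroup_le _ (by positivity) _
    rw [hu] at hle
    linarith
  refine ⟨fun t => growthWeight K t • u t, (continuous_growthWeight K).smul u.continuous,
    fun t => ?_, fun t => ?_⟩
  · rw [norm_growthWeight_smul]
    exact mul_le_mul_of_nonneg_left ((u.norm_coe_le_norm t).trans hnorm)
      (growthWeight_pos K t).le
  · have hut : (growthWeight K t)⁻¹ • picardMap G φ (fun s => growthWeight K s • u s) t = u t :=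
      DFunLike.congr_fun hu t
    exact (inv_smul_eq_iff₀ (growthWeight_pos K t).ne').1 hut |>.symm

theorem IsVolterraLipschitz.exists_solution (hG : IsVolterraLipschitz G K) (φ : ℝ →ᵇ E) :
    ∃ x : ℝ → E, Continuous x ∧ (∀ t ≤ 0, x t = φ t) ∧
      (∀ t, ‖x t‖ ≤ growthWeight K t * (2 * ‖φ‖)) ∧
      ∀ t, 0 ≤ t → HasDerivWithinAt x (G t x) (Ici t) t := by
  obtain ⟨x, hx, hbound, hpicard⟩ := hG.exists_eq_picardMap φ
  refine ⟨x, hx, fun t ht => ?_, hbound, fun t ht => ?_⟩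
  · rw [hpicard, picardMap, max_eq_right ht, min_eq_left ht, intervalIntegral.integral_same,
      add_zero]
  · have hcont := hG.continuous_apply x hx
    have heq : ∀ s ∈ Ici t, x s = φ 0 + ∫ u in (0 : ℝ)..s, G u x := fun s hs => by
      have hs0 : 0 ≤ s := ht.trans hs
      rw [hpicard, picardMap, min_eq_right hs0, max_eq_left hs0]
    have hderiv : HasDerivAt (fun s => φ 0 + ∫ u in (0 : ℝ)..s, G u x) (G t x) t :=
      (intervalIntegral.integral_hasDerivAt_right (hcont.intervalIntegrable _ _)
        (hcont.stronglyMeasurableAtFilter _ _) hcont.continuousAt).const_add _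
    exact hderiv.hasDerivWithinAt.congr heq (heq t self_mem_Ici)

end Volterra

section Ricker

/-- The Ricker function `x ↦ x e^{-c x}`, the shape of the birth term of the Nicholson
equation. -/
def ricker (c x : ℝ) : ℝ := x * Real.exp (-(c * x))

lemma ricker_nonneg (c : ℝ) {x : ℝ} (hx : 0 ≤ x) : 0 ≤ ricker c x :=
  mul_nonneg hx (Real.exp_pos _).le

lemma ricker_le_self {c x : ℝ} (hc : 0 ≤ c) (hx : 0 ≤ x) : ricker c x ≤ x :=
  mul_le_of_le_one_right hx (Real.exp_le_one_iff.2 (neg_nonpos.2 (mul_nonneg hc hx)))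

lemma hasDerivAt_ricker (c x : ℝ) :
    HasDerivAt (ricker c) ((1 - c * x) * Real.exp (-(c * x))) x := by
  have hexp : HasDerivAt (fun x => Real.exp (-(c * x))) (Real.exp (-(c * x)) * -(c * 1)) x :=
    ((hasDerivAt_id x).const_mul c).neg.exp
  exact ((hasDerivAt_id' x).mul hexp).congr_deriv (by ring)

-- The slope `(1 - u) e^{-u}` of the Ricker function, `u = c x`, is least at `u = 2`.
lemma monotone_ricker_add_exp_neg_two_mul (c : ℝ) :
    Monotone fun x => ricker c x + Real.exp (-2) * x := by
  refine monotone_of_hasDerivAt_nonneg (fun x => (hasDerivAt_ricker c x).add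
    ((hasDerivAt_id x).const_mul (Real.exp (-2)))) fun x => ?_
  have hfactor : Real.exp (-2) = Real.exp (c * x - 2) * Real.exp (-(c * x)) := by
    rw [← Real.exp_add]; congr 1; ring
  have hslope : 0 ≤ 1 - c * x + Real.exp (c * x - 2) := by
    linarith [Real.add_one_le_exp (c * x - 2)]
  rw [mul_one, hfactor, ← add_mul]
  exact mul_nonneg hslope (Real.exp_pos _).le

lemma neg_exp_neg_two_mul_le_ricker_sub (c : ℝ) {x y : ℝ} (hxy : x ≤ y) :
    -(Real.exp (-2) * (y - x)) ≤ ricker c y - ricker c x := by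
  have hmono := monotone_ricker_add_exp_neg_two_mul c hxy
  dsimp only at hmono
  linarith

lemma lipschitzOnWith_ricker {c : ℝ} (hc : 0 ≤ c) : LipschitzOnWith 1 (ricker c) (Ici 0) := by
  refine (convex_Ici 0).lipschitzOnWith_of_nnnorm_hasDerivWithin_le
    (fun x _ => (hasDerivAt_ricker c x).hasDerivWithinAt) fun x hx => ?_
  have hcx : 0 ≤ c * x := mul_nonneg hc hx
  have habs : |1 - c * x| ≤ Real.exp (c * x) :=
    abs_le.2 ⟨by linarith [Real.add_one_le_exp (c * x)], by linarith [Real.one_le_exp hcx]⟩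
  rw [← NNReal.coe_le_coe, coe_nnnorm, Real.norm_eq_abs, NNReal.coe_one, abs_mul, Real.abs_exp]
  calc |1 - c * x| * Real.exp (-(c * x)) ≤ Real.exp (c * x) * Real.exp (-(c * x)) := by gcongr
    _ = 1 := by rw [← Real.exp_add, add_neg_cancel, Real.exp_zero]

lemma abs_ricker_max_zero_sub_le {c : ℝ} (hc : 0 ≤ c) (x y : ℝ) :
    |ricker c (max x 0) - ricker c (max y 0)| ≤ |x - y| := by
  have hdist := (lipschitzOnWith_ricker hc).dist_le_mul (max x 0) (le_max_right x 0)
    (max y 0) (le_max_right y 0)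
  rw [NNReal.coe_one, one_mul, Real.dist_eq, Real.dist_eq] at hdist
  exact hdist.trans (abs_max_sub_max_le_abs x y 0)

end Ricker

section ExponentialCone

variable {m : ℕ} {r μ : Fin m → ℝ}

lemma strPosN.pos {hr : ∀ i, 0 < r i} {φ : XN m r} (hφ : strPosN hr μ φ) (i : Fin m)
    (s : Icc (-(r i)) (0 : ℝ)) : 0 < φ i s := by
  obtain ⟨hlip, hleft, hderiv⟩ := hφ
  obtain ⟨K, hK⟩ := hlip i
  obtain ⟨ε, hε, hae⟩ := hderiv i
  have hext : LipschitzWith (K * 1) (extN hr φ i) := hK.comp (LipschitzWith.projIcc _)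
  have hext_left : extN hr φ i (-(r i)) = φ i (ptnegN r hr i) := by simp [extN, ptnegN]
  have hext_s : extN hr φ i s = φ i s := by simp [extN]
  have hae_s : ∀ᵐ x ∂volume.restrict (Ioo (-(r i)) (s : ℝ)),
      0 ≤ deriv (extN hr φ i) x + μ i * extN hr φ i x := by
    filter_upwards [ae_restrict_of_ae_restrict_of_subset (Ioo_subset_Ioo_right s.2.2) hae]
      with x hx using hε.le.trans hx.2
  have hle := mul_exp_le_mul_exp_of_ae_deriv s.2.1
    hext.lipschitzOnWith.absolutelyContinuousOnInterval hae_s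
  rw [hext_left, hext_s] at hle
  exact pos_of_mul_pos_left ((mul_pos (hleft i) (Real.exp_pos _)).trans_le hle)
    (Real.exp_pos _).le

lemma strPosN_const (hr : ∀ i, 0 < r i) (hμ : ∀ i, 0 < μ i) {v : Fin m → ℝ}
    (hv : ∀ i, 0 < v i) : strPosN hr μ (fun i _ => v i) := by
  refine ⟨fun i => ⟨0, LipschitzWith.const _⟩, hv, fun i => ⟨μ i * v i, mul_pos (hμ i) (hv i),
    Eventually.of_forall fun s => ?_⟩⟩
  have hext : extN hr (fun i _ => v i) i = fun _ => v i := rfl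
  simp [hext]

end ExponentialCone

section Coefficients

lemma supR_nonneg {f : ℝ → ℝ} (hf : ∀ t, 0 ≤ f t) : 0 ≤ supR f :=
  Real.sSup_nonneg (forall_mem_range.2 hf)

variable {m : ℕ} {d β c : Fin m → ℝ → ℝ} {a : Fin m → Fin m → ℝ → ℝ} {r μ : Fin m → ℝ}

/-- Nonnegative continuous coefficients of a Nicholson system, all but `c` bounded above. -/
structure BoundedCoeffs (d : Fin m → ℝ → ℝ) (a : Fin m → Fin m → ℝ → ℝ)
    (β c : Fin m → ℝ → ℝ) : Prop where
  continuous_d : ∀ i, Continuous (d i)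
  continuous_a : ∀ i j, Continuous (a i j)
  continuous_β : ∀ i, Continuous (β i)
  continuous_c : ∀ i, Continuous (c i)
  d_nonneg : ∀ i t, 0 ≤ d i t
  a_nonneg : ∀ i j t, 0 ≤ a i j t
  β_nonneg : ∀ i t, 0 ≤ β i t
  c_nonneg : ∀ i t, 0 ≤ c i t
  bddAbove_d : ∀ i, BddAbove (range (d i))
  bddAbove_a : ∀ i j, BddAbove (range (a i j))
  bddAbove_β : ∀ i, BddAbove (range (β i))

lemma NicholsonHyps.boundedCoeffs (hN : NicholsonHyps m d a β c) : BoundedCoeffs d a β c := by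
  obtain ⟨hd, ha, hβ, hc, ⟨d₀, hd₀, hdd₀⟩, ha₀, -, hβ₀, ⟨c₀, hc₀, hcc₀⟩, -⟩ := hN
  exact
    { continuous_d := fun i => (hd i).1
      continuous_a := fun i j => (ha i j).1
      continuous_β := fun i => (hβ i).1
      continuous_c := fun i => (hc i).1
      d_nonneg := fun i t => hd₀.le.trans (hdd₀ i t)
      a_nonneg := ha₀
      β_nonneg := fun i t => (hβ₀ i t).le
      c_nonneg := fun i t => hc₀.le.trans (hcc₀ i t)
      bddAbove_d := fun i => (hd i).bddAbove_range
      bddAbove_a := fun i j => (ha i j).bddAbove_range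
      bddAbove_β := fun i => (hβ i).bddAbove_range }

lemma NicholsonHyps.supR_β_pos (hN : NicholsonHyps m d a β c) (i : Fin m) : 0 < supR (β i) :=
  have ⟨_, _, hβ, _, _, _, _, hβ₀, _, _⟩ := hN
  (hβ₀ i 0).trans_le (le_supR (hβ i).bddAbove_range 0)

/-- The condition on the exponents `μ` under which the Nicholson system is strictly monotone
for the exponential order: the loss `dᵢ⁺` and the steepest decrease `βᵢ⁺ e^{-2}` of the birth
term, amplified by `e^{μᵢ rᵢ}` over one delay, are together dominated by `μᵢ`. -/
def IsMonotoneExponent (d β : Fin m → ℝ → ℝ) (r μ : Fin m → ℝ) : Prop :=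
  ∀ i, supR (d i) + supR (β i) * Real.exp (μ i * r i - 2) < μ i

lemma IsMonotoneExponent.supR_d_lt (hμ : IsMonotoneExponent d β r μ)
    (hC : BoundedCoeffs d a β c) (i : Fin m) : supR (d i) < μ i :=
  (le_add_of_nonneg_right
    (mul_nonneg (supR_nonneg (hC.β_nonneg i)) (Real.exp_pos _).le)).trans_lt (hμ i)

lemma IsMonotoneExponent.pos (hμ : IsMonotoneExponent d β r μ) (hC : BoundedCoeffs d a β c)
    (i : Fin m) : 0 < μ i :=
  (supR_nonneg (hC.d_nonneg i)).trans_lt (hμ.supR_d_lt hC i)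

-- `muN` is the maximizer of `μ - β⁺ e^{μ r - 2}`, at which `β⁺ e^{μ r - 2} = 1 / r`.
lemma isMonotoneExponent_muN (hr : ∀ i, 0 < r i) (hβ : ∀ i, 0 < supR (β i))
    (hcond : ∀ i, r i * supR (β i) * Real.exp (supR (d i) * r i) < Real.exp 1) :
    IsMonotoneExponent d β r (muN r β) := by
  intro i
  have hri := hr i
  have hrβ : 0 < r i * supR (β i) := mul_pos hri (hβ i)
  have hmu : muN r β i * r i = 2 - Real.log (r i * supR (β i)) := by
    rw [muN, Real.log_div (Real.exp_pos 2).ne' hrβ.ne', Real.log_exp]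
    field_simp
  have hexp : r i * (supR (β i) * Real.exp (muN r β i * r i - 2)) = 1 := by
    rw [hmu, sub_sub_cancel_left, Real.exp_neg, Real.exp_log hrβ, ← mul_assoc,
      mul_inv_cancel₀ hrβ.ne']
  have hlog : Real.log (r i * supR (β i)) + supR (d i) * r i < 1 := by
    have hlt := Real.log_lt_log (mul_pos hrβ (Real.exp_pos _)) (hcond i)
    rwa [Real.log_mul hrβ.ne' (Real.exp_pos _).ne', Real.log_exp, Real.log_exp] at hlt
  refine lt_of_mul_lt_mul_left ?_ hri.le
  linarith

end Coefficients

section RightHandSide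

variable {m : ℕ} {d β c : Fin m → ℝ → ℝ} {a : Fin m → Fin m → ℝ → ℝ} {r μ : Fin m → ℝ}
  {y z : ℝ → Fin m → ℝ} {i : Fin m} {t : ℝ}

lemma rhs_eq (d β c : Fin m → ℝ → ℝ) (a : Fin m → Fin m → ℝ → ℝ) (r : Fin m → ℝ) (i : Fin m)
    (t : ℝ) (y : ℝ → Fin m → ℝ) :
    rhs d a β c r i t y =
      -(d i t) * y t i + ∑ j, a i j t * y t j + β i t * ricker (c i t) (y (t - r i) i) := by
  rw [rhs, ricker, mul_assoc (β i t)]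

lemma rhs_sub_rhs :
    rhs d a β c r i t y - rhs d a β c r i t z =
      -(d i t) * (y t i - z t i) + ∑ j, a i j t * (y t j - z t j) +
        β i t * (ricker (c i t) (y (t - r i) i) - ricker (c i t) (z (t - r i) i)) := by
  simp only [rhs_eq, mul_sub, Finset.sum_sub_distrib]
  ring

lemma BoundedCoeffs.continuousOn_rhs (hC : BoundedCoeffs d a β c) (hr : ∀ i, 0 < r i)
    (hy : ∀ i, ContinuousOn (fun t => y t i) (Ici (-(r i)))) (i : Fin m) :
    ContinuousOn (fun t => rhs d a β c r i t y) (Ici 0) := by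
  have hnow (j : Fin m) : ContinuousOn (fun t => y t j) (Ici 0) :=
    (hy j).mono (Ici_subset_Ici.2 (neg_nonpos.2 (hr j).le))
  have hdelay : ContinuousOn (fun t => y (t - r i) i) (Ici 0) :=
    (hy i).comp (f := fun t => t - r i) (by fun_prop) fun t ht => by
      simpa [sub_eq_add_neg] using ht
  unfold rhs
  exact (((hC.continuous_d i).neg.continuousOn.mul (hnow i)).add
    (continuousOn_finsetSum _ fun j _ => (hC.continuous_a i j).continuousOn.mul (hnow j))).add
    (((hC.continuous_β i).continuousOn.mul hdelay).mul
      ((hC.continuous_c i).continuousOn.mul hdelay).neg.rexp)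

lemma BoundedCoeffs.mul_le_rhs_add_mul (hC : BoundedCoeffs d a β c) (μ : ℝ)
    (hnow : ∀ j, 0 ≤ y t j) (hdelay : 0 ≤ y (t - r i) i) :
    (μ - supR (d i)) * y t i ≤ rhs d a β c r i t y + μ * y t i := by
  have hmigration : 0 ≤ ∑ j, a i j t * y t j :=
    Finset.sum_nonneg fun j _ => mul_nonneg (hC.a_nonneg i j t) (hnow j)
  have hbirth : 0 ≤ β i t * ricker (c i t) (y (t - r i) i) :=
    mul_nonneg (hC.β_nonneg i t) (ricker_nonneg _ hdelay)
  have hloss := mul_le_mul_of_nonneg_right (le_supR (hC.bddAbove_d i) t) (hnow i)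
  rw [rhs_eq]
  linarith

lemma BoundedCoeffs.rhs_le (hC : BoundedCoeffs d a β c) {η : ℝ}
    (hnow : ∀ j, y t j ∈ Icc 0 η) (hdelay : y (t - r i) i ∈ Icc 0 η) :
    rhs d a β c r i t y ≤ (∑ j, supR (a i j) + supR (β i)) * η := by
  have hloss : 0 ≤ d i t * y t i := mul_nonneg (hC.d_nonneg i t) (hnow i).1
  have hmigration : ∑ j, a i j t * y t j ≤ (∑ j, supR (a i j)) * η := by
    rw [Finset.sum_mul]
    exact Finset.sum_le_sum fun j _ => mul_le_mul (le_supR (hC.bddAbove_a i j) t) (hnow j).2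
      (hnow j).1 (supR_nonneg (hC.a_nonneg i j))
  have hbirth : β i t * ricker (c i t) (y (t - r i) i) ≤ supR (β i) * η :=
    mul_le_mul (le_supR (hC.bddAbove_β i) t)
      ((ricker_le_self (hC.c_nonneg i t) hdelay.1).trans hdelay.2)
      (ricker_nonneg _ hdelay.1) (supR_nonneg (hC.β_nonneg i))
  rw [rhs_eq, add_mul]
  linarith

lemma IsMonotoneExponent.rhs_sub_rhs_add_mul_pos (hμ : IsMonotoneExponent d β r μ)
    (hC : BoundedCoeffs d a β c) (hnow : ∀ j, 0 < y t j - z t j)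
    (hdelay : 0 ≤ y (t - r i) i - z (t - r i) i)
    (hexp : y (t - r i) i - z (t - r i) i ≤ (y t i - z t i) * Real.exp (μ i * r i)) :
    0 < rhs d a β c r i t y - rhs d a β c r i t z + μ i * (y t i - z t i) := by
  set w := y t i - z t i
  have hmigration : 0 ≤ ∑ j, a i j t * (y t j - z t j) :=
    Finset.sum_nonneg fun j _ => mul_nonneg (hC.a_nonneg i j t) (hnow j).le
  have hloss : d i t * w ≤ supR (d i) * w :=
    mul_le_mul_of_nonneg_right (le_supR (hC.bddAbove_d i) t) (hnow i).le
  have hbirth : -(supR (β i) * Real.exp (μ i * r i - 2) * w) ≤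
      β i t * (ricker (c i t) (y (t - r i) i) - ricker (c i t) (z (t - r i) i)) :=
    calc -(supR (β i) * Real.exp (μ i * r i - 2) * w)
        = -(supR (β i) * (Real.exp (-2) * (w * Real.exp (μ i * r i)))) := by
          rw [sub_eq_neg_add, Real.exp_add]; ring
      _ ≤ -(β i t * (Real.exp (-2) * (y (t - r i) i - z (t - r i) i))) := by
          have := supR_nonneg (hC.β_nonneg i)
          have := le_supR (hC.bddAbove_β i) t
          gcongr
      _ = β i t * -(Real.exp (-2) * (y (t - r i) i - z (t - r i) i)) := by ring
      _ ≤ _ := mul_le_mul_of_nonneg_left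
          (neg_exp_neg_two_mul_le_ricker_sub _ (sub_nonneg.1 hdelay)) (hC.β_nonneg i t)
  have hgap : 0 < (μ i - (supR (d i) + supR (β i) * Real.exp (μ i * r i - 2))) * w :=
    mul_pos (sub_pos.2 (hμ i)) (hnow i)
  rw [rhs_sub_rhs]
  linarith

end RightHandSide

section Solutions

variable {m : ℕ} {d β c : Fin m → ℝ → ℝ} {a : Fin m → Fin m → ℝ → ℝ} {r μ : Fin m → ℝ}
  {φ χ : XN m r} {y z : ℝ → Fin m → ℝ} {R : ℝ}

lemma SolN.nonneg_of_nonpos (hy : SolN d a β c r φ y) (hφ : XPos φ) (i : Fin m) :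
    ∀ s ∈ Icc (-(r i)) 0, 0 ≤ y s i := fun s hs => by
  rw [hy.2.1 i ⟨s, hs⟩]
  exact hφ i _

lemma SolN.pos_of_nonneg (hy : SolN d a β c r φ y) (hC : BoundedCoeffs d a β c)
    (hr : ∀ i, 0 < r i) (hφ : XPos φ) (hφ₀ : ∀ i, 0 < φ i (pt0N r hr i)) :
    ∀ t, 0 ≤ t → ∀ i, 0 < y t i := by
  refine forall_pos_of_delay_rightDeriv_add_mul_nonneg (y' := fun t i => rhs d a β c r i t y)
    (μ := fun i => supR (d i)) hr hy.1 hy.2.2 (hy.nonneg_of_nonpos hφ)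
    (fun i => (hφ₀ i).trans_eq (hy.2.1 i (pt0N r hr i)).symm) fun i t hnow hdelay => ?_
  simpa using hC.mul_le_rhs_add_mul (supR (d i)) hnow hdelay

/-- The right-hand side with the delayed argument of the Ricker function truncated at `0`, which
makes it globally Lipschitz; positive solutions do not see the truncation. -/
def truncRhs (d : Fin m → ℝ → ℝ) (a : Fin m → Fin m → ℝ → ℝ) (β c : Fin m → ℝ → ℝ)
    (r : Fin m → ℝ) (t : ℝ) (y : ℝ → Fin m → ℝ) (i : Fin m) : ℝ :=
  -(d i t) * y t i + ∑ j, a i j t * y t j + β i t * ricker (c i t) (max (y (t - r i) i) 0)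

lemma truncRhs_eq_rhs {t : ℝ} {i : Fin m} (hdelay : 0 ≤ y (t - r i) i) :
    truncRhs d a β c r t y i = rhs d a β c r i t y := by
  rw [truncRhs, rhs_eq, max_eq_left hdelay]

lemma BoundedCoeffs.abs_truncRhs_sub_le (hC : BoundedCoeffs d a β c) {t ρ : ℝ} {i : Fin m}
    (hnow : ∀ j, |y t j - z t j| ≤ ρ) (hdelay : |y (t - r i) i - z (t - r i) i| ≤ ρ) :
    |truncRhs d a β c r t y i - truncRhs d a β c r t z i| ≤
      (supR (d i) + ∑ j, supR (a i j) + supR (β i)) * ρ := by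
  have habs {f : ℝ → ℝ} (hf : ∀ t, 0 ≤ f t) (hbdd : BddAbove (range f)) {v : ℝ}
      (hv : |v| ≤ ρ) : |f t * v| ≤ supR f * ρ := by
    rw [abs_mul, abs_of_nonneg (hf t)]
    exact mul_le_mul (le_supR hbdd t) hv (abs_nonneg _) (supR_nonneg hf)
  have hloss := habs (hC.d_nonneg i) (hC.bddAbove_d i) (hnow i)
  have hmigration : |∑ j, a i j t * (y t j - z t j)| ≤ (∑ j, supR (a i j)) * ρ := by
    rw [Finset.sum_mul]
    exact (Finset.abs_sum_le_sum_abs _ _).trans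
      (Finset.sum_le_sum fun j _ => habs (hC.a_nonneg i j) (hC.bddAbove_a i j) (hnow j))
  have hbirth := habs (hC.β_nonneg i) (hC.bddAbove_β i)
    ((abs_ricker_max_zero_sub_le (hC.c_nonneg i t) _ _).trans hdelay)
  have hsplit : truncRhs d a β c r t y i - truncRhs d a β c r t z i =
      -(d i t * (y t i - z t i)) + ∑ j, a i j t * (y t j - z t j) + β i t *
        (ricker (c i t) (max (y (t - r i) i) 0) - ricker (c i t) (max (z (t - r i) i) 0)) := by
    simp only [truncRhs, mul_sub, Finset.sum_sub_distrib]
    ring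
  rw [hsplit, add_mul, add_mul]
  refine (abs_add_three _ _ _).trans ?_
  rw [abs_neg]
  gcongr

lemma BoundedCoeffs.isVolterraLipschitz_truncRhs (hC : BoundedCoeffs d a β c)
    (hr : ∀ i, 0 < r i) :
    IsVolterraLipschitz (truncRhs d a β c r)
      (∑ i, (supR (d i) + ∑ j, supR (a i j) + supR (β i))) where
  continuous_apply y hy := by
    refine continuous_pi fun i => ?_
    have := hC.continuous_d i
    have := hC.continuous_a i
    have := hC.continuous_β i
    have := hC.continuous_c i
    unfold truncRhs ricker
    fun_prop
  norm_sub_le t y z ρ hρ := by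
    have hρ₀ : 0 ≤ ρ := (norm_nonneg _).trans (hρ t le_rfl)
    have hcoord {s : ℝ} (hs : s ≤ t) (j : Fin m) : |y s j - z s j| ≤ ρ :=
      (norm_le_pi_norm (y s - z s) j).trans (hρ s hs)
    have hconst (i : Fin m) : 0 ≤ supR (d i) + ∑ j, supR (a i j) + supR (β i) :=
      add_nonneg (add_nonneg (supR_nonneg (hC.d_nonneg i))
        (Finset.sum_nonneg fun j _ => supR_nonneg (hC.a_nonneg i j)))
        (supR_nonneg (hC.β_nonneg i))
    have hsum := Finset.sum_nonneg fun i (_ : i ∈ Finset.univ) => hconst i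
    refine (pi_norm_le_iff_of_nonneg (mul_nonneg hsum hρ₀)).2 fun i => ?_
    refine (hC.abs_truncRhs_sub_le (hcoord le_rfl)
      (hcoord (sub_le_self t (hr i).le) i)).trans ?_
    exact mul_le_mul_of_nonneg_right
      (Finset.single_le_sum (fun j _ => hconst j) (Finset.mem_univ i)) hρ₀
  map_zero t := by ext i; simp [truncRhs, ricker]

lemma BoundedCoeffs.solN_of_truncRhs (hC : BoundedCoeffs d a β c) (hr : ∀ i, 0 < r i) {δ : ℝ}
    (hδ : 0 < δ) (hz : Continuous z) (hpast : ∀ t ≤ 0, ∀ i, z t i = δ)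
    (hz' : ∀ t, 0 ≤ t → HasDerivWithinAt z (truncRhs d a β c r t z) (Ici t) t) :
    SolN d a β c r (fun _ _ => δ) z ∧ ∀ t i, 0 < z t i := by
  have hz'coord : ∀ i t, 0 ≤ t →
      HasDerivWithinAt (fun s => z s i) (truncRhs d a β c r t z i) (Ici t) t :=
    fun i t ht => hasDerivWithinAt_pi.1 (hz' t ht) i
  have hcont (i : Fin m) : ContinuousOn (fun t => z t i) (Ici (-(r i))) :=
    (continuous_apply i |>.comp hz).continuousOn
  have hpos : ∀ t, 0 ≤ t → ∀ i, 0 < z t i := by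
    refine forall_pos_of_delay_rightDeriv_add_mul_nonneg (μ := fun i => supR (d i)) hr hcont
      hz'coord (fun i s hs => hδ.le.trans_eq (hpast s hs.2 i).symm)
      (fun i => hδ.trans_eq (hpast 0 le_rfl i).symm) fun i t hnow hdelay => ?_
    rw [truncRhs_eq_rhs hdelay]
    simpa using hC.mul_le_rhs_add_mul (supR (d i)) hnow hdelay
  have hpos' (t : ℝ) (i : Fin m) : 0 < z t i :=
    (le_total t 0).elim (fun ht => hδ.trans_eq (hpast t ht i).symm) fun ht => hpos t ht i
  refine ⟨⟨hcont, fun i s => hpast s s.2.2 i, fun i t ht => ?_⟩, hpos'⟩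
  rw [← truncRhs_eq_rhs (hpos' _ i).le]
  exact hz'coord i t ht

lemma BoundedCoeffs.exists_small_solN (hC : BoundedCoeffs d a β c) (hr : ∀ i, 0 < r i) (R : ℝ)
    {η : ℝ} (hη : 0 < η) :
    ∃ δ > 0, ∃ z, SolN d a β c r (fun _ _ => δ) z ∧ ∀ t ≤ R, ∀ i, z t i ∈ Icc 0 η := by
  have hG := hC.isVolterraLipschitz_truncRhs hr
  set K := ∑ i, (supR (d i) + ∑ j, supR (a i j) + supR (β i))
  have hw := growthWeight_pos K R
  let δ := η / (2 * growthWeight K R)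
  have hδ : 0 < δ := by positivity
  obtain ⟨z, hz, hpast, hbound, hz'⟩ :=
    hG.exists_solution (BoundedContinuousFunction.const ℝ fun _ => δ)
  obtain ⟨hsol, hpos⟩ := hC.solN_of_truncRhs hr hδ hz
    (fun t ht i => congrFun (hpast t ht) i) hz'
  refine ⟨δ, hδ, z, hsol, fun t ht i => ⟨(hpos t i).le, ?_⟩⟩
  have hhistory : ‖BoundedContinuousFunction.const ℝ (fun _ : Fin m => δ)‖ ≤ δ :=
    (BoundedContinuousFunction.norm_const_le _).trans
      ((pi_norm_const_le δ).trans_eq (Real.norm_of_nonneg hδ.le))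
  calc z t i ≤ ‖z t‖ := (le_abs_self _).trans (norm_le_pi_norm (z t) i)
    _ ≤ growthWeight K t * (2 * ‖BoundedContinuousFunction.const ℝ (fun _ : Fin m => δ)‖) :=
        hbound t
    _ ≤ growthWeight K R * (2 * δ) := by
        gcongr
        exact growthWeight_mono hG.nonneg ht
    _ = η := by simp only [δ]; field_simp

lemma SolN.lt_of_rhs_sub_rhs_add_mul_pos (hy : SolN d a β c r φ y) (hz : SolN d a β c r χ z)
    (hC : BoundedCoeffs d a β c) (hr : ∀ i, 0 < r i) (hμ : IsMonotoneExponent d β r μ)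
    (hzero : ∀ i, z 0 i < y 0 i)
    (hinit : ∀ i, ∀ t ∈ Icc 0 (r i),
      0 < rhs d a β c r i t y - rhs d a β c r i t z + μ i * (y t i - z t i)) :
    ∀ t, 0 ≤ t → ∀ i, z t i < y t i := by
  suffices hpos : ∀ t, 0 ≤ t → ∀ i, 0 < (y t - z t) i from
    fun t ht i => sub_pos.1 (hpos t ht i)
  refine forall_pos_of_expMonotone_imp
    (w' := fun t i => rhs d a β c r i t y - rhs d a β c r i t z) (μ := μ)
    (fun i => ((hy.1 i).sub (hz.1 i)).mono (Ici_subset_Ici.2 (neg_nonpos.2 (hr i).le)))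
    (fun i => (hC.continuousOn_rhs hr hy.1 i).sub (hC.continuousOn_rhs hr hz.1 i))
    (fun i t ht => (hy.2.2 i t ht).sub (hz.2.2 i t ht)) (fun i => sub_pos.2 (hzero i))
    fun t ht hpos hmono i => ?_
  rcases le_total t (r i) with hle | hge
  · exact hinit i t ⟨ht, hle⟩
  have hdelay_mem : t - r i ∈ Icc 0 t := ⟨sub_nonneg.2 hge, sub_le_self t (hr i).le⟩
  have ht_mem : t ∈ Icc 0 t := ⟨ht, le_rfl⟩
  refine hμ.rhs_sub_rhs_add_mul_pos hC (hpos t ht_mem) (hpos _ hdelay_mem i).le ?_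
  have hle := hmono i hdelay_mem ht_mem hdelay_mem.2
  have hexp : Real.exp (μ i * t) = Real.exp (μ i * r i) * Real.exp (μ i * (t - r i)) := by
    rw [← Real.exp_add]; congr 1; ring
  dsimp only [Pi.sub_apply] at hle
  rw [hexp, ← mul_assoc] at hle
  exact le_of_mul_le_mul_right hle (Real.exp_pos _)

lemma SolN.exists_pos_forall_le (hy : SolN d a β c r φ y) (hr : ∀ i, 0 < r i)
    (hpos : ∀ t, 0 ≤ t → ∀ i, 0 < y t i) (R : ℝ) :
    ∃ b > 0, ∀ t ∈ Icc 0 R, ∀ i, b ≤ y t i := by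
  have hcoord (i : Fin m) : ∃ b > 0, ∀ t ∈ Icc 0 R, b ≤ y t i :=
    isCompact_Icc.exists_forall_le'
      ((hy.1 i).mono fun t ht => (neg_nonpos.2 (hr i).le).trans ht.1)
      fun t ht => hpos t ht.1 i
  choose b hb hbound using hcoord
  obtain ⟨b₀, hb₀, hlt⟩ := Pi.exists_forall_pos_add_lt hb
  exact ⟨b₀, hb₀, fun t ht i => (by linarith [hlt i] : b₀ ≤ b i).trans (hbound i t ht)⟩

lemma SolN.exists_const_solN_lt (hy : SolN d a β c r φ y) (hC : BoundedCoeffs d a β c)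
    (hr : ∀ i, 0 < r i) (hμ : IsMonotoneExponent d β r μ) (hφ : XPos φ)
    (hφ₀ : ∀ i, 0 < φ i (pt0N r hr i)) :
    ∃ δ > 0, ∃ z, SolN d a β c r (fun _ _ => δ) z ∧ ∀ t, 0 ≤ t → ∀ i, z t i < y t i := by
  have hpos := hy.pos_of_nonneg hC hr hφ hφ₀
  obtain ⟨R, hR⟩ := (finite_range r).bddAbove
  have hrR (i : Fin m) : r i ≤ R := hR (mem_range_self i)
  obtain ⟨b, hb, hyb⟩ := hy.exists_pos_forall_le hr hpos R
  have hgap (i : Fin m) : 0 < μ i - supR (d i) := sub_pos.2 (hμ.supR_d_lt hC i)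
  obtain ⟨η, hη, hηb, hηgap⟩ := exists_pos_lt_forall_mul_lt hb (fun i => mul_pos (hgap i) hb)
    fun i => ∑ j, supR (a i j) + supR (β i) + μ i
  obtain ⟨δ, hδ, z, hz, hzη⟩ := hC.exists_small_solN hr R hη
  refine ⟨δ, hδ, z, hz, hy.lt_of_rhs_sub_rhs_add_mul_pos hz hC hr hμ (fun i => ?_)
    fun i t ht => ?_⟩
  · have hR₀ : 0 ≤ R := (hr i).le.trans (hrR i)
    exact (hzη 0 hR₀ i).2.trans_lt (hηb.trans_le (hyb 0 ⟨le_rfl, hR₀⟩ i))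
  · have htR : t ≤ R := ht.2.trans (hrR i)
    have hy_lower : (μ i - supR (d i)) * b ≤ rhs d a β c r i t y + μ i * y t i :=
      (mul_le_mul_of_nonneg_left (hyb t ⟨ht.1, htR⟩ i) (hgap i).le).trans <|
        hC.mul_le_rhs_add_mul (μ i) (fun j => (hpos t ht.1 j).le)
          (hy.nonneg_of_nonpos hφ i _ ⟨by linarith [ht.1], by linarith [ht.2]⟩)
    have hz_upper : rhs d a β c r i t z ≤ (∑ j, supR (a i j) + supR (β i)) * η :=
      hC.rhs_le (hzη t htR) (hzη _ (by linarith [hr i]) i)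
    have hμz : μ i * z t i ≤ μ i * η :=
      mul_le_mul_of_nonneg_left (hzη t htR i).2 (hμ.pos hC i).le
    have hηi := hηgap i
    rw [add_mul] at hηi
    linarith

-- For constant `ψ = ε`, `ψ ≤_B y_t` asks for `y' + μ y ≥ μ ε`, and `y' + μ y ≥ (μ - d⁺) M`.
lemma SolN.expLeN_const_segN (hy : SolN d a β c r φ y) (hC : BoundedCoeffs d a β c)
    (hr : ∀ i, 0 < r i) (hμ : IsMonotoneExponent d β r μ) {M t₀ t : ℝ} (hM : 0 ≤ M)
    (hyM : ∀ s, t₀ ≤ s → ∀ i, M ≤ y s i) (hrR : ∀ i, r i ≤ R) (ht : max t₀ 0 + 2 * R ≤ t) :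
    expLeN μ (fun i _ => (μ i - supR (d i)) * M / μ i) (segN r y t) := by
  have ht₀ := le_max_left t₀ 0
  have hzero := le_max_right t₀ 0
  refine ⟨fun i s => ?_, fun i s u hsu => ?_⟩
  · have hs : t₀ ≤ t + s := by linarith [s.2.1, hrR i, hr i]
    refine le_trans ?_ (hyM _ hs i)
    rw [div_le_iff₀ (hμ.pos hC i), mul_comm M]
    exact mul_le_mul_of_nonneg_right (sub_le_self _ (supR_nonneg (hC.d_nonneg i))) hM
  · set ε := (μ i - supR (d i)) * M / μ i
    have hμε : μ i * ε = (μ i - supR (d i)) * M := mul_div_cancel₀ _ (hμ.pos hC i).ne'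
    have hmono : MonotoneOn (fun v => (y v i - ε) * Real.exp (μ i * v)) (Icc (t - r i) t) := by
      refine monotoneOn_mul_exp_of_rightDeriv (f' := fun v => rhs d a β c r i v y)
        (((hy.1 i).sub continuousOn_const).mono fun v hv => ?_)
        (fun v hv => (hy.2.2 i v ?_).sub_const _) fun v hv => ?_
      · exact mem_Ici.2 (by linarith [hv.1, hrR i, hr i])
      · linarith [hv.1, hrR i, hr i]
      · have hv₀ : t₀ ≤ v - r i := by linarith [hv.1, hrR i]
        have hvM := hyM v (by linarith [hr i])
        have hlower := hC.mul_le_rhs_add_mul (μ i) (fun j => hM.trans (hvM j))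
          (hM.trans (hyM _ hv₀ i))
        have hgap := mul_le_mul_of_nonneg_left (hvM i) (sub_pos.2 (hμ.supR_d_lt hC i)).le
        linarith
    have hle := hmono (a := t + s) (b := t + u) ⟨by linarith [s.2.1], by linarith [s.2.2]⟩
      ⟨by linarith [u.2.1], by linarith [u.2.2]⟩ (by linarith)
    simp only [mul_add, Real.exp_add] at hle
    refine le_of_mul_le_mul_right ?_ (Real.exp_pos (μ i * t))
    simp only [segN]
    linarith

end Solutions

section Persistence

variable {m : ℕ} {d β c : Fin m → ℝ → ℝ} {a : Fin m → Fin m → ℝ → ℝ} {r μ : Fin m → ℝ}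
  {hr : ∀ i, 0 < r i}

/-- Uniform persistence of the Nicholson system in the interior of the cone of the exponential
order with exponents `μ`. -/
def ExpPersistent (d : Fin m → ℝ → ℝ) (a : Fin m → Fin m → ℝ → ℝ) (β c : Fin m → ℝ → ℝ)
    (hr : ∀ i, 0 < r i) (μ : Fin m → ℝ) : Prop :=
  ∃ ψ : XN m r, strPosN hr μ ψ ∧
    ∀ φ : XN m r, strPosN hr μ φ → ∀ y : ℝ → Fin m → ℝ, SolN d a β c r φ y →
      ∃ t₀ : ℝ, ∀ t, t₀ ≤ t → expLeN μ ψ (segN r y t)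

/-- Uniform persistence of the Nicholson system in the interior of the standard cone `X₊`. -/
def StdPersistent (d : Fin m → ℝ → ℝ) (a : Fin m → Fin m → ℝ → ℝ) (β c : Fin m → ℝ → ℝ)
    (hr : ∀ i, 0 < r i) : Prop :=
  ∃ M : ℝ, 0 < M ∧
    ∀ φ : XN m r, XPos φ → (∀ i, 0 < φ i (pt0N r hr i)) →
      ∀ y : ℝ → Fin m → ℝ, SolN d a β c r φ y → ∃ t₀ : ℝ, ∀ t, t₀ ≤ t → ∀ i, M ≤ y t i

lemma ExpPersistent.stdPersistent (h : ExpPersistent d a β c hr μ)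
    (hC : BoundedCoeffs d a β c) (hμ : IsMonotoneExponent d β r μ) :
    StdPersistent d a β c hr := by
  obtain ⟨ψ, hψ, hpersist⟩ := h
  obtain ⟨M, hM, hMψ⟩ := Pi.exists_forall_pos_add_lt hψ.2.1
  refine ⟨M, hM, fun φ hφ hφ₀ y hy => ?_⟩
  obtain ⟨δ, hδ, z, hz, hzy⟩ := hy.exists_const_solN_lt hC hr hμ hφ hφ₀
  obtain ⟨t₀, ht₀⟩ := hpersist _ (strPosN_const hr (hμ.pos hC) fun _ => hδ) z hz
  refine ⟨max t₀ 0, fun t ht i => ?_⟩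
  have hψz : ψ i (ptnegN r hr i) ≤ segN r z (t + r i) i (ptnegN r hr i) :=
    (ht₀ (t + r i) (by linarith [hr i, le_max_left t₀ 0])).1 i _
  have hseg : segN r z (t + r i) i (ptnegN r hr i) = z t i := by simp [segN, ptnegN]
  linarith [hMψ i, hzy t ((le_max_right t₀ 0).trans ht) i]

lemma StdPersistent.expPersistent (h : StdPersistent d a β c hr) (hC : BoundedCoeffs d a β c)
    (hμ : IsMonotoneExponent d β r μ) : ExpPersistent d a β c hr μ := by
  obtain ⟨M, hM, hpersist⟩ := h
  obtain ⟨R, hR⟩ := (finite_range r).bddAbove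
  refine ⟨fun i _ => (μ i - supR (d i)) * M / μ i, strPosN_const hr (hμ.pos hC) fun i =>
    div_pos (mul_pos (sub_pos.2 (hμ.supR_d_lt hC i)) hM) (hμ.pos hC i), fun φ hφ y hy => ?_⟩
  obtain ⟨t₀, ht₀⟩ := hpersist φ (fun i s => (hφ.pos i s).le) (fun i => hφ.pos i _) y hy
  exact ⟨max t₀ 0 + 2 * R, fun t ht =>
    hy.expLeN_const_segN hC hr hμ hM.le ht₀ (fun i => hR (mem_range_self i)) ht⟩

theorem statement17_general (hr : ∀ i, 0 < r i) (hC : BoundedCoeffs d a β c)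
    (hμ : IsMonotoneExponent d β r μ) :
    ExpPersistent d a β c hr μ ↔ StdPersistent d a β c hr :=
  ⟨fun h => h.stdPersistent hC hμ, fun h => h.expPersistent hC hμ⟩

end Persistence

/-- under the strict condition `rᵢ βᵢ⁺ e^{dᵢ⁺ rᵢ} < e`, uniform persistence
in `Int K̃_B` is equivalent to uniform persistence in `Int X₊`. -/
theorem statement17
    {m : ℕ} (hm : 1 ≤ m)
    (d : Fin m → ℝ → ℝ) (a : Fin m → Fin m → ℝ → ℝ) (β c : Fin m → ℝ → ℝ)
    (r : Fin m → ℝ) (hr : ∀ i, 0 < r i)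
    (hN : NicholsonHyps m d a β c)
    (hcond : ∀ i, r i * supR (β i) * Real.exp (supR (d i) * r i) < Real.exp 1) :
    -- (a) uniform persistence in the interior of the exponential cone
    (∃ ψ : XN m r, strPosN hr (muN r β) ψ ∧
      ∀ φ : XN m r, strPosN hr (muN r β) φ →
        ∀ y : ℝ → Fin m → ℝ, SolN d a β c r φ y →
          ∃ t₀ : ℝ, ∀ t, t₀ ≤ t → expLeN (muN r β) ψ (segN r y t))
    ↔
    -- (b) uniform persistence in the interior of the standard cone
    (∃ M : ℝ, 0 < M ∧
      ∀ φ : XN m r, XPos φ → (∀ i, 0 < φ i (pt0N r hr i)) →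
        ∀ y : ℝ → Fin m → ℝ, SolN d a β c r φ y →
          ∃ t₀ : ℝ, ∀ t, t₀ ≤ t → ∀ i, M ≤ y t i) := by
  exact statement17_general hr hN.boundedCoeffs
    (isMonotoneExponent_muN hr hN.supR_β_pos hcond)

end Nicholson
end
end
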